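/- For every positive integer k, if G is a (k²+3k+5)-connected finite simple graph, then for every pair of vertices s, t of G there exists a path P in G from s to t such that the graph obtained from G by deleting the edges of P is k-connected. -/

import Mathlib

/-- A simple graph `G` is `k`-connected if it has at least `k+1` vertices and removing any
set of fewer than `k` vertices leaves a connected induced subgraph. -/
def KConnected {W : Type*} (G : SimpleGraph W) (k : ℕ) : Prop :=
  k + 1 ≤ Nat.card W ∧
    ∀ S : Set W, S.Finite → S.ncard < k → (G.induce (Sᶜ : Set W)).Connected

/-!
Fix the generic rigidity matroids `M` of dimension `k` and `N` of dimension `1` on the pairs of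
vertices. A graph spanning `M` is `k`-connected, since a smaller separator would act as a hinge
about which one side could rotate, and a graph spanning `N` is connected. So it suffices to find
disjoint sets of edges of `G` that span `M` and `N`: the path is taken in the second one. They exist
as soon as the closure of `G` in the union `U` of the matroids `M` and `N` is a complete graph: then
`G` has the rank in `U` of a large complete graph, which is the sum of the ranks of `M` and `N`.

Replace `G` by its closure. A vertex with `k + 1` neighbours in a clique on `2 * k + 2` vertices is
then joined to the whole clique. Build a vertex-induced subgraph of `G` vertex by vertex, in a
uniformly random order. Adding a vertex `v` with earlier neighbours `B` raises the rank in `U` by at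
least `min (k + 1) #B` (0-extensions), and by at least `k + 2` if `B` is large and not a clique
(a 1-extension on a non-adjacent pair in `B`). If no vertex has a clique as its neighbourhood, then
`B` is large and not a clique often enough for the expected total increase to exceed the upper bound
`(k + 1) * #X` on the rank, once all degrees are at least `k ^ 2 + 3 * k + 5`. Hence there is a
simplicial vertex. Removing it preserves connectivity; by induction the rest is complete, and the
removed vertex, having many neighbours in it, is joined to all of it.
-/

namespace RemovablePath

open Finset Module

/-- The set of edges joining the vertex `v` to the vertices of `Z`. -/
def star {V : Type*} (v : V) (Z : Finset V) : Set (Sym2 V) :=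
  (fun z ↦ s(v, z)) '' Z

section LinearIndependence

variable {ι K M M' : Type*} [Field K] [AddCommGroup M] [Module K M] [AddCommGroup M'] [Module K M']
  {f : ι → M}

lemma linearIndepOn_union_of_comp {s t : Set ι} (φ : M →ₗ[K] M') (hs : LinearIndepOn K f s)
    (hφs : ∀ i ∈ s, φ (f i) = 0) (ht : LinearIndepOn K (φ ∘ f) t) :
    LinearIndepOn K f (s ∪ t) := by
  refine hs.union (ht.of_comp φ) (Disjoint.mono_left (b := LinearMap.ker φ) ?_ ?_)
  · rw [Submodule.span_le]
    rintro _ ⟨i, hi, rfl⟩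
    exact hφs i hi
  · simpa only [Set.image_eq_range] using (Submodule.range_ker_disjoint ht).symm

lemma linearIndepOn_insert_sub_smul {s : Set ι} {a : ι} {c : K} (ha : a ∉ s) (hc : c ≠ 1)
    (hf : LinearIndepOn K f (insert a s)) :
    LinearIndepOn K (fun i ↦ f i - c • f a) (insert a s) := by
  have factor : f a - c • f a = (1 - c) • f a := by rw [sub_smul, one_smul]
  rw [Set.insert_eq, linearIndepOn_union_iff_quotient (by simpa using ha)] at hf
  refine linearIndepOn_union_of_comp (Submodule.mkQ (Submodule.span K (f '' {a}))) ?_ ?_ ?_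
  · have hfa : f a ≠ 0 := hf.1.ne_zero rfl
    refine LinearIndepOn.singleton ?_
    rw [factor]
    exact smul_ne_zero (sub_ne_zero.2 hc.symm) hfa
  · rintro i rfl
    rw [Submodule.mkQ_apply, Submodule.Quotient.mk_eq_zero, factor]
    exact Submodule.smul_mem _ _ (Submodule.subset_span ⟨i, rfl, rfl⟩)
  · refine hf.2.congr fun i _ ↦ ?_
    have : Submodule.mkQ (Submodule.span K (f '' {a})) (f a) = 0 := by
      rw [Submodule.mkQ_apply, Submodule.Quotient.mk_eq_zero]
      exact Submodule.subset_span ⟨a, rfl, rfl⟩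
    simp [-Submodule.mkQ_apply, this]

end LinearIndependence

section RigidityRow

variable {V K E : Type*} [DecidableEq V] [Field K] [AddCommGroup E] [Module K E]

/-- The row of the rigidity matrix of the placement `p` belonging to the pair `e`: the vector with
entry `p x - p y` at `x` and `p y - p x` at `y`, where `e = s(x, y)`. Diagonal pairs get the zero
row. -/
def rigidityRow (p : V → E) : Sym2 V → V → E :=
  Sym2.lift ⟨fun x y ↦ Pi.single x (p x - p y) + Pi.single y (p y - p x), fun _ _ ↦ add_comm _ _⟩

lemma rigidityRow_mk (p : V → E) (x y : V) :
    rigidityRow p s(x, y) = Pi.single x (p x - p y) + Pi.single y (p y - p x) := rfl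

lemma rigidityRow_self (p : V → E) (x : V) : rigidityRow p s(x, x) = 0 := by
  simp [rigidityRow_mk]

lemma rigidityRow_apply_of_notMem (p : V → E) {e : Sym2 V} {v : V} (hv : v ∉ e) :
    rigidityRow p e v = 0 := by
  induction e with
  | h x y =>
    rw [Sym2.mem_iff, not_or] at hv
    simp [rigidityRow_mk, hv.1, hv.2]

lemma rigidityRow_apply_left (p : V → E) (v z : V) :
    rigidityRow p s(v, z) v = p v - p z := by
  by_cases h : v = z <;> simp [rigidityRow_mk, h]

lemma rigidityRow_congr {p q : V → E} {e : Sym2 V} (h : ∀ v ∈ e, p v = q v) :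
    rigidityRow p e = rigidityRow q e := by
  induction e with
  | h x y => rw [rigidityRow_mk, rigidityRow_mk, h x (by simp), h y (by simp)]

lemma rigidityRow_midpoint [NeZero (2 : K)] {p : V → E} {v x y : V}
    (hv : p v = (2⁻¹ : K) • (p x + p y)) :
    rigidityRow p s(x, y) = (2 : K) • (rigidityRow p s(v, x) + rigidityRow p s(v, y)) := by
  have two_smul_pv : (2 : K) • p v = p x + p y := by rw [hv, smul_inv_smul₀ two_ne_zero]
  simp only [rigidityRow_mk, smul_add, ← Pi.single_smul, smul_sub, two_smul_pv]
  simp only [two_smul, Pi.single_sub, Pi.single_add]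
  abel

variable {p : V → E} {I : Set (Sym2 V)} {v : V} {Z : Finset V}

lemma linearIndepOn_rigidityRow_union_star (hI : LinearIndepOn K (rigidityRow p) I)
    (hvI : ∀ e ∈ I, v ∉ e) (hZ : LinearIndepOn K (fun z ↦ p z - p v) Z) :
    LinearIndepOn K (rigidityRow p) (I ∪ star v Z) := by
  let φ : (V → E) →ₗ[K] E := -LinearMap.proj v
  have φ_row : ∀ z, φ (rigidityRow p s(v, z)) = p z - p v := fun z ↦ by
    simp [φ, rigidityRow_apply_left]
  refine linearIndepOn_union_of_comp φ hI (fun e he ↦ ?_) (LinearIndepOn.image_of_comp _ _ ?_)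
  · simp [φ, rigidityRow_apply_of_notMem p (hvI e he)]
  · simpa only [Function.comp_def, φ_row] using hZ

lemma linearIndepOn_sub_update_midpoint [NeZero (2 : K)] {x y : V} (hvZ : v ∉ insert y Z)
    (hyZ : y ∉ Z) (hZ : LinearIndepOn K (fun z ↦ p z - p x) (insert y Z : Finset V)) :
    LinearIndepOn K (fun z ↦ Function.update p v ((2⁻¹ : K) • (p x + p y)) z -
      Function.update p v ((2⁻¹ : K) • (p x + p y)) v) (insert y Z : Finset V) := by
  have half_ne_one : (2⁻¹ : K) ≠ 1 := by
    rw [ne_eq, inv_eq_one, ← sub_eq_zero]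
    norm_num
  rw [coe_insert] at hZ
  rw [coe_insert]
  refine (linearIndepOn_insert_sub_smul (mod_cast hyZ) half_ne_one hZ).congr fun z hz ↦ ?_
  have hzv : z ≠ v := by
    rintro rfl
    exact hvZ (by exact_mod_cast hz)
  have halves : p x = (2⁻¹ : K) • p x + (2⁻¹ : K) • p x := by
    rw [← two_smul K, smul_inv_smul₀ two_ne_zero]
  simp only [Function.update_of_ne hzv, Function.update_self, smul_sub, smul_add]
  nth_rw 1 [halves]
  abel

lemma linearIndepOn_rigidityRow_update_midpoint [NeZero (2 : K)] {x y : V}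
    (hI : LinearIndepOn K (rigidityRow p) (insert s(x, y) I)) (hxyI : s(x, y) ∉ I)
    (hvI : ∀ e ∈ I, v ∉ e) (hvx : v ≠ x) (hvZ : v ∉ insert y Z) (hxZ : x ∉ insert y Z)
    (hyZ : y ∉ Z) (hZ : LinearIndepOn K (fun z ↦ p z - p x) (insert y Z : Finset V)) :
    LinearIndepOn K (rigidityRow (Function.update p v ((2⁻¹ : K) • (p x + p y))))
      (I ∪ star v (insert x (insert y Z))) := by
  set q := Function.update p v ((2⁻¹ : K) • (p x + p y)) with hq
  have hvy : v ≠ y := fun h ↦ hvZ (h ▸ mem_insert_self _ _)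
  have hvxy : v ∉ s(x, y) := by simp [hvx, hvy]
  have avoids : ∀ e ∈ insert s(x, y) I, v ∉ e := by
    rintro e (rfl | he)
    exacts [hvxy, hvI e he]
  have hIq : LinearIndepOn K (rigidityRow q) (insert s(x, y) I) :=
    hI.congr fun e he ↦ rigidityRow_congr fun u hu ↦
      (Function.update_of_ne (ne_of_mem_of_not_mem hu (avoids e he)) _ _).symm
  have extended := linearIndepOn_rigidityRow_union_star hIq avoids
    (linearIndepOn_sub_update_midpoint hvZ hyZ hZ)
  have hxy_notMem : s(x, y) ∉ I ∪ star v (insert y Z) := by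
    rintro (h | ⟨z, -, h⟩)
    exacts [hxyI h, hvxy (h ▸ Sym2.mem_mk_left v z)]
  have hvx_notMem : s(v, x) ∉ I ∪ star v (insert y Z) := by
    rintro (h | ⟨z, hz, h⟩)
    exacts [hvI _ h (Sym2.mem_mk_left v x), hxZ (Sym2.congr_right.1 h ▸ mod_cast hz)]
  have star_insert_x : I ∪ star v (insert x (insert y Z)) =
      insert s(v, x) (I ∪ star v (insert y Z)) := by
    rw [star, coe_insert, Set.image_insert_eq, Set.union_insert, star]
  rw [Set.insert_union, linearIndepOn_insert hxy_notMem] at extended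
  rw [star_insert_x, linearIndepOn_insert hvx_notMem]
  refine ⟨extended.1, fun h ↦ extended.2 ?_⟩
  rw [rigidityRow_midpoint (K := K) (v := v) (by simp [hq, hvx.symm, hvy.symm])]
  refine Submodule.smul_mem _ _ (Submodule.add_mem _ h (Submodule.subset_span ⟨s(v, y), ?_, rfl⟩))
  exact Or.inr ⟨y, by simp, rfl⟩

end RigidityRow

section GeneralPosition

variable {V K E : Type*} [Field K] [AddCommGroup E] [Module K E]

/-- A placement `p` is in general position in dimension `d` if any `d + 1` of its points are
affinely independent; affine independence is expressed through the difference vectors to an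
arbitrary base point. -/
def GeneralPosition (K : Type*) [Field K] [Module K E] (p : V → E) (d : ℕ) : Prop :=
  ∀ (v : V) (Z : Finset V), v ∉ Z → #Z ≤ d → LinearIndepOn K (fun z ↦ p z - p v) Z

variable {p : V → E} {d : ℕ}

lemma GeneralPosition.exists_dual (hp : GeneralPosition K p d) {x y : V} {S : Finset V}
    (hxy : x ≠ y) (hxS : x ∉ S) (hyS : y ∉ S) (hS : #S < d) :
    ∃ α : Dual K E, α (p x - p y) ≠ 0 ∧ ∀ u ∈ S, α (p u - p y) = 0 := by
  classical
  have indep := hp y (insert x S) (by simp [hxy.symm, hyS])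
    (by rwa [card_insert_of_notMem hxS])
  rw [coe_insert, linearIndepOn_insert (mod_cast hxS)] at indep
  obtain ⟨α, hαx, hα⟩ := Submodule.exists_le_ker_of_notMem indep.2
  exact ⟨α, hαx, fun u hu ↦ hα (Submodule.subset_span ⟨u, hu, rfl⟩)⟩

variable [DecidableEq V]

-- The self-stress `ω i j = l i * l j` coming from an affine dependence `l` of the points of `T`.
lemma sum_mul_smul_rigidityRow_eq_zero {T : Finset V} {l : V → K} (hl : ∑ i ∈ T, l i = 0)
    (hlp : ∑ i ∈ T, l i • p i = 0) :
    ∑ i ∈ T, ∑ j ∈ T, (l i * l j) • rigidityRow p s(i, j) = 0 := by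
  have equilibrium : ∀ i, ∑ j ∈ T, l j • (p i - p j) = 0 := fun i ↦ by
    simp only [smul_sub, sum_sub_distrib, ← sum_smul, hl, hlp, zero_smul, sub_zero]
  have half : ∑ i ∈ T, ∑ j ∈ T, (l i * l j) • (Pi.single i (p i - p j) : V → E) = 0 := by
    refine sum_eq_zero fun i _ ↦ ?_
    calc ∑ j ∈ T, (l i * l j) • (Pi.single i (p i - p j) : V → E)
        = Pi.single i (l i • ∑ j ∈ T, l j • (p i - p j)) := by
          simp only [smul_sum, ← LinearMap.single_apply (R := K), map_sum, map_smul, mul_smul]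
      _ = 0 := by rw [equilibrium, smul_zero, Pi.single_zero]
  simp only [rigidityRow_mk, smul_add, sum_add_distrib]
  rw [half, zero_add, sum_comm]
  simpa only [mul_comm] using half

lemma exists_sum_smul_sub_eq_zero [FiniteDimensional K E]
    (hp : GeneralPosition K p (finrank K E)) {v w : V} {Z : Finset V} (hZ : #Z = finrank K E)
    (hvZ : v ∉ Z) (hw : w ∉ Z) :
    ∃ m : V → K, ∑ i ∈ insert w Z, m i • (p i - p v) = 0 ∧ m w ≠ 0 ∧
      ∑ i ∈ insert w Z, m i ≠ 0 := by
  have dependent : ¬ LinearIndepOn K (fun z ↦ p z - p v) (insert w Z : Finset V) := fun h ↦ by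
    have card_le := LinearIndependent.fintype_card_le_finrank h
    simp only [coe_sort_coe, Fintype.card_coe, card_insert_of_notMem hw] at card_le
    lia
  rw [linearIndepOn_finset_iff] at dependent
  push Not at dependent
  obtain ⟨m, hm, u, hu, hmu⟩ := dependent
  have mw_ne_zero : m w ≠ 0 := by
    intro hmw
    rw [sum_insert hw, hmw, zero_smul, zero_add] at hm
    have := linearIndepOn_finset_iff.1 (hp v Z hvZ hZ.le) m hm
    rcases mem_insert.1 hu with rfl | hu
    exacts [hmu hmw, hmu (this u hu)]
  refine ⟨m, hm, mw_ne_zero, fun hsum ↦ mw_ne_zero ?_⟩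
  have based_at_w : ∑ z ∈ insert w Z, m z • (p z - p w) = 0 := by
    simp only [smul_sub, sum_sub_distrib, ← sum_smul, hsum, zero_smul, sub_zero] at hm ⊢
    exact hm
  rw [sum_insert hw, sub_self, smul_zero, zero_add] at based_at_w
  have := linearIndepOn_finset_iff.1 (hp w Z hw hZ.le) m based_at_w
  rwa [sum_insert hw, sum_eq_zero this, add_zero] at hsum

lemma exists_affine_dependence [FiniteDimensional K E] (hp : GeneralPosition K p (finrank K E))
    {v w : V} {Z : Finset V} (hZ : #Z = finrank K E) (hv : v ∉ insert w Z) (hw : w ∉ Z) :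
    ∃ l : V → K, ∑ i ∈ insert v (insert w Z), l i = 0 ∧
      ∑ i ∈ insert v (insert w Z), l i • p i = 0 ∧ l v ≠ 0 ∧ l w ≠ 0 := by
  obtain ⟨m, hm, mw_ne_zero, sum_ne_zero⟩ :=
    exists_sum_smul_sub_eq_zero hp hZ (fun h ↦ hv (mem_insert_of_mem h)) hw
  set l := Function.update m v (-∑ i ∈ insert w Z, m i)
  have l_v : l v = -∑ i ∈ insert w Z, m i := Function.update_self ..
  have l_eq : ∀ i ∈ insert w Z, l i = m i :=
    fun i hi ↦ Function.update_of_ne (ne_of_mem_of_not_mem hi hv) _ _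
  refine ⟨l, ?_, ?_, ?_, ?_⟩
  · rw [sum_insert hv, sum_congr rfl l_eq, l_v, neg_add_cancel]
  · have sum_l_smul : ∑ i ∈ insert w Z, l i • p i = ∑ i ∈ insert w Z, m i • p i :=
      sum_congr rfl fun i hi ↦ by rw [l_eq i hi]
    rw [sum_insert hv, sum_l_smul, l_v, neg_smul, sum_smul, neg_add_eq_sub, ← sum_sub_distrib]
    simpa only [smul_sub] using hm
  · rwa [l_v, neg_ne_zero]
  · rwa [l_eq w (mem_insert_self _ _)]

lemma rigidityRow_mem_of_clique_minus_edge [NeZero (2 : K)] [FiniteDimensional K E]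
    (hp : GeneralPosition K p (finrank K E)) {v w : V} {Z : Finset V} (hZ : #Z = finrank K E)
    (hv : v ∉ insert w Z) (hw : w ∉ Z) {W : Submodule K (V → E)}
    (hW : ∀ i ∈ insert v (insert w Z), ∀ j ∈ insert v (insert w Z), s(i, j) ≠ s(v, w) →
      rigidityRow p s(i, j) ∈ W) :
    rigidityRow p s(v, w) ∈ W := by
  obtain ⟨l, hl, hlp, hlv, hlw⟩ := exists_affine_dependence hp hZ hv hw
  have hvw : v ≠ w := fun h ↦ hv (h ▸ mem_insert_self _ _)
  have stress := congrArg W.mkQ (sum_mul_smul_rigidityRow_eq_zero hl hlp)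
  simp only [map_zero, map_sum, map_smul] at stress
  rw [← sum_product', sum_eq_add_of_mem (v, w) (w, v) (by simp) (by simp) (by simp [hvw])]
    at stress
  · rw [Sym2.eq_swap (a := w), mul_comm (l w), ← add_smul, ← two_mul, smul_eq_zero] at stress
    refine (Submodule.Quotient.mk_eq_zero W).1 (stress.resolve_left ?_)
    exact mul_ne_zero two_ne_zero (mul_ne_zero hlv hlw)
  · rintro ⟨i, j⟩ hij ⟨hvw', hwv'⟩
    rw [mem_product] at hij
    rw [ne_eq, Prod.mk.injEq] at hvw' hwv'
    have row_mem := hW i hij.1 j hij.2 (by rw [ne_eq, Sym2.eq_iff]; tauto)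
    rw [Submodule.mkQ_apply, (Submodule.Quotient.mk_eq_zero W).2 row_mem, smul_zero]

lemma sum_apply_rigidityRow [Fintype V] (ν : V → Dual K E) (i j : V) :
    ∑ u, ν u (rigidityRow p s(i, j) u) = (ν i - ν j) (p i - p j) := by
  have sum_single : ∀ (a : V) (b : E), ∑ u, ν u ((Pi.single a b : V → E) u) = ν a b :=
    fun a b ↦ by
      rw [Fintype.sum_eq_single a fun u hu ↦ by rw [Pi.single_eq_of_ne hu, map_zero],
        Pi.single_eq_same]
  simp only [rigidityRow_mk, Pi.add_apply, map_add, sum_add_distrib, sum_single]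
  rw [LinearMap.sub_apply, ← neg_sub (p i) (p j), map_neg, ← sub_eq_add_neg]

-- The functionals `ν u` are the velocities of an infinitesimal motion of the framework `(F, p)`.
lemma velocity_apply_eq_zero_of_mem_span [Finite V] {F : Set (Sym2 V)} {ν : V → Dual K E}
    (hν : ∀ i j, s(i, j) ∈ F → (ν i - ν j) (p i - p j) = 0) {x y : V}
    (hxy : rigidityRow p s(x, y) ∈ Submodule.span K (rigidityRow p '' F)) :
    (ν x - ν y) (p x - p y) = 0 := by
  have := Fintype.ofFinite V
  let φ : Dual K (V → E) := ∑ u, ν u ∘ₗ LinearMap.proj u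
  have φ_row : ∀ i j, φ (rigidityRow p s(i, j)) = (ν i - ν j) (p i - p j) := fun i j ↦ by
    rw [← sum_apply_rigidityRow]
    simp [φ]
  have span_le_ker : Submodule.span K (rigidityRow p '' F) ≤ LinearMap.ker φ := by
    rw [Submodule.span_le]
    rintro _ ⟨e, he, rfl⟩
    induction e with
    | h i j => exact (φ_row i j).trans (hν i j he)
  exact (φ_row x y).symm.trans (span_le_ker hxy)

lemma GeneralPosition.exists_crossing [Finite V] (hp : GeneralPosition K p d) {F : Set (Sym2 V)}
    {A S : Finset V} {x y : V}
    (hxy : rigidityRow p s(x, y) ∈ Submodule.span K (rigidityRow p '' F))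
    (hxA : x ∈ A) (hxS : x ∉ S) (hyA : y ∉ A) (hyS : y ∉ S) (hS : #S < d) :
    ∃ a ∈ A, ∃ b ∉ A ∪ S, s(a, b) ∈ F := by
  by_contra! no_crossing
  have x_ne_y : x ≠ y := ne_of_mem_of_not_mem hxA hyA
  obtain ⟨α, hαx, hαS⟩ := hp.exists_dual x_ne_y hxS hyS hS
  obtain ⟨β, hβy, hβS⟩ := hp.exists_dual x_ne_y.symm hyS hxS hS
  -- `ω` rotates space about the hinge `S`; `ν` applies it to the part `A` only.
  let ω : V → Dual K E := fun u ↦ β (p u - p x) • α - α (p u - p y) • β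
  let ν : V → Dual K E := fun u ↦ if u ∈ A then ω u else 0
  have ω_preserves : ∀ i j, (ω i - ω j) (p i - p j) = 0 := fun i j ↦ by
    simp only [ω, LinearMap.sub_apply, LinearMap.smul_apply, smul_eq_mul, map_sub]
    ring
  have ν_eq_ω : ∀ i j, s(i, j) ∈ F → i ∈ A → ν j = ω j := fun i j hij hi ↦ by
    by_cases hj : j ∈ A
    · exact if_pos hj
    · have hjS : j ∈ S := by_contra fun h ↦ no_crossing i hi j (by simp [hj, h]) hij
      simp only [ν, ω, hj, if_false, hαS j hjS, hβS j hjS, zero_smul, sub_zero]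
  have ν_preserves : ∀ i j, s(i, j) ∈ F → (ν i - ν j) (p i - p j) = 0 := fun i j hij ↦ by
    by_cases hi : i ∈ A
    · rw [ν_eq_ω i j hij hi, show ν i = ω i from if_pos hi, ω_preserves]
    by_cases hj : j ∈ A
    · rw [ν_eq_ω j i (Sym2.eq_swap ▸ hij) hj, show ν j = ω j from if_pos hj, ω_preserves]
    · simp only [ν, hi, hj, if_false, sub_self, LinearMap.zero_apply]
  have ν_xy := velocity_apply_eq_zero_of_mem_span ν_preserves hxy
  simp only [ν, ω, hxA, hyA, if_true, if_false, sub_self, map_zero, zero_smul, zero_sub, sub_zero,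
    LinearMap.neg_apply, LinearMap.smul_apply, smul_eq_mul, neg_eq_zero, mul_eq_zero] at ν_xy
  rcases ν_xy with h | h
  · exact hαx h
  · exact hβy (by rw [← neg_sub, map_neg, h, neg_zero])

lemma encard_le_of_linearIndepOn_rigidityRow [FiniteDimensional K E] {I : Set (Sym2 V)}
    {X : Finset V} (hI : LinearIndepOn K (rigidityRow p) I) (hIX : I ⊆ X.sym2) :
    I.encard ≤ (finrank K E * #X : ℕ) := by
  let restrict : (V → E) →ₗ[K] X → E := LinearMap.funLeft K E Subtype.val
  have vanish_off : ∀ r ∈ Submodule.span K (rigidityRow p '' I), ∀ v ∉ X, r v = 0 := by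
    intro r hr v hv
    have span_le : Submodule.span K (rigidityRow p '' I) ≤
        LinearMap.ker (LinearMap.proj (R := K) (φ := fun _ : V ↦ E) v) := by
      rw [Submodule.span_le]
      rintro _ ⟨e, he, rfl⟩
      exact rigidityRow_apply_of_notMem p fun hve ↦ hv (mem_sym2_iff.1 (hIX he) v hve)
    exact span_le hr
  have injOn : Set.InjOn restrict (Submodule.span K (rigidityRow p '' I)) := by
    intro r hr r' hr' h
    funext v
    by_cases hv : v ∈ X
    · exact congrFun h ⟨v, hv⟩
    · rw [vanish_off r hr v hv, vanish_off r' hr' v hv]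
  refine (hI.map_injOn restrict injOn).encard_le_toENat_rank.trans_eq ?_
  rw [← finrank_eq_rank, finrank_pi_fintype]
  simp [mul_comm]

end GeneralPosition

section Generic

lemma linearIndependent_iff_det_mul_transpose_ne_zero {ι μ : Type*} [Fintype ι] [DecidableEq ι]
    [Fintype μ] (A : Matrix ι μ ℝ) :
    LinearIndependent ℝ A.row ↔ (A * A.transpose).det ≠ 0 := by
  have gram_eq : Matrix.gram ℝ (fun i ↦ WithLp.toLp 2 (A i)) = A * A.transpose := by
    ext i j
    simp [Matrix.gram_apply, Matrix.mul_apply, PiLp.inner_apply, mul_comm]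
  rw [← gram_eq, Matrix.det_gram_ne_zero_iff_linearIndependent]
  exact ((WithLp.linearEquiv 2 ℝ (μ → ℝ)).symm.toLinearMap.linearIndependent_iff
    (LinearEquiv.ker _)).symm

variable {ι μ σ : Type*}

lemma exists_mvPolynomial_forall_linearIndependent [Finite ι] [Finite μ]
    (A : ι → μ → MvPolynomial σ ℝ) {q : σ → ℝ}
    (hq : LinearIndependent ℝ fun i j ↦ (A i j).eval q) :
    ∃ f : MvPolynomial σ ℝ, f ≠ 0 ∧ ∀ p, f.eval p ≠ 0 →
      LinearIndependent ℝ fun i j ↦ (A i j).eval p := by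
  classical
  have := Fintype.ofFinite ι
  have := Fintype.ofFinite μ
  let B : Matrix ι μ (MvPolynomial σ ℝ) := A
  have eval_det : ∀ p, (B * B.transpose).det.eval p =
      (B.map (MvPolynomial.eval p) * (B.map (MvPolynomial.eval p)).transpose).det := fun p ↦ by
    rw [RingHom.map_det, RingHom.mapMatrix_apply, Matrix.map_mul, Matrix.transpose_map]
  refine ⟨(B * B.transpose).det, fun h ↦ ?_, fun p hp ↦ ?_⟩
  · refine (linearIndependent_iff_det_mul_transpose_ne_zero _).1 hq ?_
    exact (eval_det q).symm.trans (by rw [h, map_zero])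
  · rw [eval_det] at hp
    exact (linearIndependent_iff_det_mul_transpose_ne_zero _).2 hp

lemma exists_mvPolynomial_forall_linearIndepOn [Finite ι] [Finite μ]
    (A : ι → μ → MvPolynomial σ ℝ) :
    ∃ f : MvPolynomial σ ℝ, f ≠ 0 ∧ ∀ p, f.eval p ≠ 0 → ∀ (q : σ → ℝ) (I : Set ι),
      LinearIndepOn ℝ (fun i j ↦ (A i j).eval q) I →
        LinearIndepOn ℝ (fun i j ↦ (A i j).eval p) I := by
  classical
  have := Fintype.ofFinite (Set ι)
  have single : ∀ I : Set ι, ∃ f : MvPolynomial σ ℝ, f ≠ 0 ∧ ∀ p, f.eval p ≠ 0 → ∀ q : σ → ℝ,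
      LinearIndepOn ℝ (fun i j ↦ (A i j).eval q) I →
        LinearIndepOn ℝ (fun i j ↦ (A i j).eval p) I := fun I ↦ by
    by_cases hI : ∃ q : σ → ℝ, LinearIndepOn ℝ (fun i j ↦ (A i j).eval q) I
    · obtain ⟨q, hq⟩ := hI
      obtain ⟨f, hf, h⟩ := exists_mvPolynomial_forall_linearIndependent (fun i : I ↦ A i) hq
      exact ⟨f, hf, fun p hp _ _ ↦ h p hp⟩
    · exact ⟨1, one_ne_zero, fun _ _ q hq ↦ absurd ⟨q, hq⟩ hI⟩
  choose f hf h using single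
  refine ⟨∏ I, f I, prod_ne_zero_iff.2 fun I _ ↦ hf I, fun p hp q I ↦ h I p ?_ q⟩
  rw [map_prod, prod_ne_zero_iff] at hp
  exact hp I (mem_univ I)

variable {V : Type*}

lemma map_rigidityRow [DecidableEq V] {E E' : Type*} [AddCommGroup E] [AddCommGroup E']
    (φ : E →+ E') (p : V → E) (e : Sym2 V) (u : V) :
    φ (rigidityRow p e u) = rigidityRow (φ ∘ p) e u := by
  induction e with
  | h x y =>
    simp only [rigidityRow_mk, Pi.add_apply, map_add, ← map_sub, Function.comp_apply,
      ← Pi.apply_single (fun _ ↦ φ) (fun _ ↦ map_zero φ)]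

lemma exists_linearIndepOn_sub {d : ℕ} {v : V} {Z : Finset V} (hv : v ∉ Z) (hZ : #Z ≤ d) :
    ∃ q : V → Fin d → ℝ, LinearIndepOn ℝ (fun z ↦ q z - q v) Z := by
  classical
  let ι : Z ↪ Fin d := Z.equivFin.toEmbedding.trans (Fin.castLEEmb hZ)
  let q : V → Fin d → ℝ := fun z ↦ if hz : z ∈ Z then Pi.single (ι ⟨z, hz⟩) 1 else 0
  refine ⟨q, ?_⟩
  have q_sub : (fun z : (Z : Set V) ↦ q z - q v) =
      (fun i : Fin d ↦ Pi.single i (1 : ℝ)) ∘ ι := by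
    funext ⟨z, hz⟩
    simp only [q, dif_neg hv, sub_zero, Function.comp_apply]
    exact dif_pos hz
  rw [LinearIndepOn, q_sub]
  exact (Pi.linearIndependent_single_one (Fin d) ℝ).comp ι ι.injective

lemma linearIndepOn_uncurry_iff {α β : Type*} {f : ι → α → β → ℝ} {I : Set ι} :
    LinearIndepOn ℝ (fun i (j : α × β) ↦ f i j.1 j.2) I ↔ LinearIndepOn ℝ f I :=
  (LinearEquiv.curry ℝ ℝ α β).symm.toLinearMap.linearIndepOn_iff_of_injOn
    (LinearEquiv.injective _).injOn

/-- A placement in `ℝᵈ` is generic if it is in general position and every set of rows of the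
rigidity matrix that is independent for some placement is independent for this one. -/
structure IsGeneric [DecidableEq V] {d : ℕ} (p : V → Fin d → ℝ) : Prop where
  generalPosition : GeneralPosition ℝ p d
  linearIndepOn (q : V → Fin d → ℝ) (I : Set (Sym2 V)) :
    LinearIndepOn ℝ (rigidityRow q) I → LinearIndepOn ℝ (rigidityRow p) I

lemma exists_isGeneric (V : Type*) [Finite V] [DecidableEq V] (d : ℕ) :
    ∃ p : V → Fin d → ℝ, IsGeneric p := by
  let X : V → Fin d → MvPolynomial (V × Fin d) ℝ := fun v i ↦ MvPolynomial.X (v, i)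
  obtain ⟨f, hf, f_generic⟩ := exists_mvPolynomial_forall_linearIndepOn
    fun e (j : V × Fin d) ↦ rigidityRow X e j.1 j.2
  obtain ⟨g, hg, g_generic⟩ := exists_mvPolynomial_forall_linearIndepOn
    fun (vz : V × V) (i : Fin d) ↦ X vz.2 i - X vz.1 i
  obtain ⟨p, hp⟩ : ∃ p, (f * g).eval p ≠ 0 := by
    by_contra! h
    exact mul_ne_zero hf hg (MvPolynomial.funext fun p ↦ by rw [h p, map_zero])
  rw [map_mul, mul_ne_zero_iff] at hp
  have eval_row : ∀ (q : V × Fin d → ℝ) e u i,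
      (rigidityRow X e u i).eval q = rigidityRow (Function.curry q) e u i := fun q e u i ↦ by
    have X_eval : (MvPolynomial.eval q).toAddMonoidHom.compLeft (Fin d) ∘ X = Function.curry q := by
      ext v i
      exact MvPolynomial.eval_X (v, i)
    rw [← X_eval, ← map_rigidityRow]
    rfl
  refine ⟨Function.curry p, fun v Z hv hZ ↦ ?_, fun q I hI ↦ ?_⟩
  · obtain ⟨q, hq⟩ := exists_linearIndepOn_sub hv hZ
    have differences := g_generic p hp.2 (Function.uncurry q) (Prod.mk v '' Z)
    simp only [X, map_sub, MvPolynomial.eval_X] at differences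
    exact (differences (.image_of_comp _ _ hq)).comp_of_image (Prod.mk_right_injective v).injOn
  · have rows := f_generic p hp.1 (Function.uncurry q) I
    simp only [eval_row, linearIndepOn_uncurry_iff, Function.curry_uncurry] at rows
    exact rows hI

end Generic

section LinearMatroid

variable {α K E : Type*} [Field K] [AddCommGroup E] [Module K E] [Finite α]

lemma exists_linearIndepOn_insert_of_ncard_lt {f : α → E} {I J : Set α}
    (hI : LinearIndepOn K f I) (hJ : LinearIndepOn K f J) (hIJ : I.ncard < J.ncard) :
    ∃ e ∈ J, e ∉ I ∧ LinearIndepOn K f (insert e I) := by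
  by_contra! hmax
  have hspan : f '' J ⊆ Submodule.span K (f '' I) := by
    rintro _ ⟨e, heJ, rfl⟩
    by_cases heI : e ∈ I
    · exact Submodule.subset_span ⟨e, heI, rfl⟩
    · by_contra he
      exact hmax e heJ heI ((linearIndepOn_insert heI).2 ⟨hI, he⟩)
  have hcard : J.encard ≤ I.encard := by
    rw [← toENat_rank_span_set hJ, ← toENat_rank_span_set hI]
    exact OrderHomClass.mono Cardinal.toENat (Submodule.rank_mono (Submodule.span_le.2 hspan))
  rw [← I.toFinite.cast_ncard_eq, ← J.toFinite.cast_ncard_eq, Nat.cast_le] at hcard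
  exact hIJ.not_ge hcard

/-- The matroid on a finite type whose independent sets are the index sets on which the family `f`
of vectors is linearly independent. -/
def linearMatroid (K : Type*) [Field K] [Module K E] (f : α → E) : Matroid α :=
  (IndepMatroid.ofFinite Set.finite_univ (LinearIndepOn K f) (linearIndepOn_empty K f)
    (fun _ _ hJ hIJ ↦ hJ.mono hIJ) (fun _ _ ↦ exists_linearIndepOn_insert_of_ncard_lt)
    fun _ _ ↦ Set.subset_univ _).matroid

@[simp]
lemma linearMatroid_indep_iff {f : α → E} {I : Set α} :
    (linearMatroid K f).Indep I ↔ LinearIndepOn K f I := by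
  simp [linearMatroid]

@[simp]
lemma linearMatroid_ground (f : α → E) : (linearMatroid K f).E = Set.univ := rfl

lemma mem_closure_linearMatroid_iff {f : α → E} {F : Set α} {e : α} :
    e ∈ (linearMatroid K f).closure F ↔ f e ∈ Submodule.span K (f '' F) := by
  have key : ∀ {I : Set α}, LinearIndepOn K f I → ∀ {e}, (e ∈ (linearMatroid K f).closure I ↔
      f e ∈ Submodule.span K (f '' I)) := by
    intro I hI e
    by_cases heI : e ∈ I
    · exact iff_of_true (Matroid.mem_closure_of_mem' _ heI) (Submodule.subset_span ⟨e, heI, rfl⟩)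
    · rw [← not_iff_not, Matroid.Indep.notMem_closure_iff (by simpa using hI) (by simp),
        linearMatroid_indep_iff, linearIndepOn_insert heI]
      tauto
  obtain ⟨I, hIF⟩ := (linearMatroid K f).exists_isBasis F
  have hI : LinearIndepOn K f I := by simpa using hIF.indep
  have hspan : Submodule.span K (f '' F) = Submodule.span K (f '' I) := by
    refine le_antisymm (Submodule.span_le.2 ?_) (Submodule.span_mono (Set.image_mono hIF.subset))
    rintro _ ⟨e, he, rfl⟩
    exact (key hI).1 (hIF.subset_closure he)
  rw [← hIF.closure_eq_closure, key hI, hspan]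

end LinearMatroid

section RigidityMatroid

variable {V : Type*}

/-- The combinatorial properties of the generic `d`-dimensional rigidity matroid on the pairs of
vertices. Diagonal pairs `s(x, x)` are included in the ground set, as loops.
`indep_zeroExtension` and `indep_oneExtension` are the Henneberg moves, `mem_closure_of_clique` says
that the edges of a complete graph on `d + 2` vertices form a circuit, and
`exists_adj_of_mem_closure` that a graph spanning the pair `s(x, y)` is not disconnected between `x`
and `y` by fewer than `d` vertices. -/
structure IsRigidityMatroid (M : Matroid (Sym2 V)) (d : ℕ) : Prop where
  ground_eq : M.E = Set.univ
  diag_mem_closure (F : Set (Sym2 V)) (x : V) : s(x, x) ∈ M.closure F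
  indep_zeroExtension {I : Set (Sym2 V)} {v : V} {Z : Finset V} (hI : M.Indep I)
    (hvI : ∀ e ∈ I, v ∉ e) (hvZ : v ∉ Z) (hZ : #Z ≤ d) : M.Indep (I ∪ star v Z)
  indep_oneExtension {I : Set (Sym2 V)} {v x y : V} {Z : Finset V}
    (hI : M.Indep (insert s(x, y) I)) (hxyI : s(x, y) ∉ I) (hvI : ∀ e ∈ I, v ∉ e) (hvZ : v ∉ Z)
    (hxZ : x ∈ Z) (hyZ : y ∈ Z) (hZ : #Z ≤ d + 1) : M.Indep (I ∪ star v Z)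
  mem_closure_of_clique {F : Set (Sym2 V)} {x y : V} {Z : Finset V} (hZ : #Z = d + 2)
    (hxZ : x ∈ Z) (hyZ : y ∈ Z)
    (hF : ∀ i ∈ Z, ∀ j ∈ Z, s(i, j) ≠ s(x, y) → s(i, j) ∈ M.closure F) : s(x, y) ∈ M.closure F
  eRk_sym2_le (X : Finset V) : M.eRk X.sym2 ≤ (d * #X : ℕ)
  exists_adj_of_mem_closure {F : Set (Sym2 V)} {x y : V} {A S : Finset V}
    (hxy : s(x, y) ∈ M.closure F) (hxA : x ∈ A) (hxS : x ∉ S) (hyA : y ∉ A) (hyS : y ∉ S)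
    (hS : #S < d) : ∃ a ∈ A, ∃ b, b ∉ A ∧ b ∉ S ∧ s(a, b) ∈ F

lemma rigidityRow_mem_of_clique {K E : Type*} [Field K] [NeZero (2 : K)] [AddCommGroup E]
    [Module K E] [FiniteDimensional K E] [DecidableEq V] {p : V → E}
    (hp : GeneralPosition K p (finrank K E)) {x y : V} {Z : Finset V} (hZ : #Z = finrank K E + 2)
    (hxZ : x ∈ Z) (hyZ : y ∈ Z) {W : Submodule K (V → E)}
    (hW : ∀ i ∈ Z, ∀ j ∈ Z, s(i, j) ≠ s(x, y) → rigidityRow p s(i, j) ∈ W) :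
    rigidityRow p s(x, y) ∈ W := by
  obtain rfl | hxy := eq_or_ne x y
  · simp [rigidityRow_self]
  have hyZx : y ∈ Z.erase x := mem_erase.2 ⟨hxy.symm, hyZ⟩
  have hZ' : insert x (insert y ((Z.erase x).erase y)) = Z := by
    rw [insert_erase hyZx, insert_erase hxZ]
  refine rigidityRow_mem_of_clique_minus_edge (Z := (Z.erase x).erase y) hp ?_ ?_
    (notMem_erase _ _) (by rwa [hZ'])
  · rw [card_erase_of_mem hyZx, card_erase_of_mem hxZ, hZ]
    rfl
  · rw [insert_erase hyZx]
    exact notMem_erase _ _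

lemma IsGeneric.linearIndepOn_oneExtension [DecidableEq V] {d : ℕ} {p : V → Fin d → ℝ}
    (hp : IsGeneric p) {I : Set (Sym2 V)} {v x y : V} {Z : Finset V}
    (hI : LinearIndepOn ℝ (rigidityRow p) (insert s(x, y) I)) (hxyI : s(x, y) ∉ I)
    (hvI : ∀ e ∈ I, v ∉ e) (hvZ : v ∉ Z) (hxZ : x ∈ Z) (hyZ : y ∈ Z) (hZ : #Z ≤ d + 1) :
    LinearIndepOn ℝ (rigidityRow p) (I ∪ star v Z) := by
  have hxy : x ≠ y := by
    rintro rfl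
    exact hI.ne_zero (Set.mem_insert _ _) (rigidityRow_self p x)
  have hZ' : insert y ((Z.erase x).erase y) = Z.erase x :=
    insert_erase (mem_erase.2 ⟨hxy.symm, hyZ⟩)
  have hindep := hp.generalPosition x (Z.erase x) (notMem_erase x Z)
    (by rw [card_erase_of_mem hxZ]; lia)
  have hext := linearIndepOn_rigidityRow_update_midpoint (Z := (Z.erase x).erase y) hI hxyI hvI
    (by rintro rfl; exact hvZ hxZ) (by simp [hZ', hvZ]) (by simp [hZ']) (notMem_erase _ _)
    (by rwa [hZ'])
  rw [hZ', insert_erase hxZ] at hext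
  exact hp.linearIndepOn _ _ hext

lemma exists_isRigidityMatroid (V : Type*) [Finite V] (d : ℕ) :
    ∃ M : Matroid (Sym2 V), IsRigidityMatroid M d := by
  classical
  obtain ⟨p, hp⟩ := exists_isGeneric V d
  refine ⟨linearMatroid ℝ (rigidityRow p), linearMatroid_ground _, fun F x ↦ ?_,
    fun hI hvI hvZ hZ ↦ ?_, fun hI hxyI hvI hvZ hxZ hyZ hZ ↦ ?_, fun hZ hxZ hyZ hF ↦ ?_,
    fun X ↦ Matroid.eRk_le_iff.2 fun I hIX hI ↦ ?_, fun hxy hxA hxS hyA hyS hS ↦ ?_⟩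
  · simp [mem_closure_linearMatroid_iff, rigidityRow_self]
  · rw [linearMatroid_indep_iff] at hI ⊢
    exact linearIndepOn_rigidityRow_union_star hI hvI (hp.generalPosition _ _ hvZ hZ)
  · rw [linearMatroid_indep_iff] at hI ⊢
    exact hp.linearIndepOn_oneExtension hI hxyI hvI hvZ hxZ hyZ hZ
  · simp only [mem_closure_linearMatroid_iff] at hF ⊢
    exact rigidityRow_mem_of_clique (by simpa using hp.generalPosition) (by rwa [finrank_fin_fun])
      hxZ hyZ hF
  · rw [linearMatroid_indep_iff] at hI
    simpa using encard_le_of_linearIndepOn_rigidityRow hI hIX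
  · rw [mem_closure_linearMatroid_iff] at hxy
    simpa [and_assoc] using hp.generalPosition.exists_crossing hxy hxA hxS hyA hyS hS

end RigidityMatroid

section MatroidUnion

variable {α : Type*} {M N : Matroid α} {I₁ I₂ J₁ J₂ F D : Set α}

/-- Independence in the union of the matroids `M` and `N`. -/
def UnionIndep (M N : Matroid α) (I : Set α) : Prop :=
  ∃ I₁ I₂, M.Indep I₁ ∧ N.Indep I₂ ∧ Disjoint I₁ I₂ ∧ I₁ ∪ I₂ = I

lemma unionIndep_comm {I : Set α} : UnionIndep M N I ↔ UnionIndep N M I := by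
  constructor <;>
  · rintro ⟨I₁, I₂, h₁, h₂, hdisj, rfl⟩
    exact ⟨I₂, I₁, h₂, h₁, hdisj.symm, Set.union_comm _ _⟩

variable [Finite α]

lemma exists_unionIndep_insert_of_maximal_overlap (hI₁ : M.Indep I₁) (hI₂ : N.Indep I₂)
    (hI : Disjoint I₁ I₂) (hJ₁ : M.Indep J₁) (hJ : Disjoint J₁ J₂) (hlt : I₁.ncard < J₁.ncard)
    (hmax : ∀ I₁' I₂', M.Indep I₁' → N.Indep I₂' → Disjoint I₁' I₂' → I₁' ∪ I₂' = I₁ ∪ I₂ →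
      (I₁' ∩ J₁).ncard + (I₂' ∩ J₂).ncard ≤ (I₁ ∩ J₁).ncard + (I₂ ∩ J₂).ncard) :
    ∃ e ∈ J₁, e ∉ I₁ ∪ I₂ ∧ UnionIndep M N (insert e (I₁ ∪ I₂)) := by
  obtain ⟨e, ⟨heJ, heI⟩, he⟩ := hI₁.augment hJ₁ (by
    rwa [← I₁.toFinite.cast_ncard_eq, ← J₁.toFinite.cast_ncard_eq, Nat.cast_lt])
  have heI₂ : e ∉ I₂ := by
    intro heI₂
    have hle := hmax (insert e I₁) (I₂ \ {e}) he (hI₂.subset Set.sdiff_subset)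
      (Set.disjoint_insert_left.2 ⟨by simp, hI.mono_right Set.sdiff_subset⟩) (by grind)
    have heJ₂ : (I₂ \ {e}) ∩ J₂ = I₂ ∩ J₂ := by
      have := hJ.notMem_of_mem_left heJ
      grind
    rw [heJ₂, Set.insert_inter_of_mem heJ, Set.ncard_insert_of_notMem (fun h ↦ heI h.1)] at hle
    lia
  exact ⟨e, heJ, by simp [heI, heI₂], insert e I₁, I₂, he, hI₂,
    Set.disjoint_insert_left.2 ⟨heI₂, hI⟩, Set.insert_union⟩

lemma UnionIndep.exists_insert_of_ncard_lt {I J : Set α} (hI : UnionIndep M N I)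
    (hJ : UnionIndep M N J) (hIJ : I.ncard < J.ncard) :
    ∃ e ∈ J, e ∉ I ∧ UnionIndep M N (insert e I) := by
  obtain ⟨J₁, J₂, hJ₁, hJ₂, hJdisj, rfl⟩ := hJ
  obtain ⟨I₀, I₀', hI₀⟩ := hI
  obtain ⟨⟨I₁, I₂⟩, ⟨hI₁, hI₂, hIdisj, rfl⟩, hmax⟩ := Set.exists_max_image
    {q : Set α × Set α | M.Indep q.1 ∧ N.Indep q.2 ∧ Disjoint q.1 q.2 ∧ q.1 ∪ q.2 = I}
    (fun q ↦ (q.1 ∩ J₁).ncard + (q.2 ∩ J₂).ncard) (Set.toFinite _) ⟨(I₀, I₀'), hI₀⟩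
  rw [Set.ncard_union_eq hIdisj, Set.ncard_union_eq hJdisj] at hIJ
  obtain hlt | hlt : I₁.ncard < J₁.ncard ∨ I₂.ncard < J₂.ncard := by lia
  · obtain ⟨e, heJ, he⟩ := exists_unionIndep_insert_of_maximal_overlap hI₁ hI₂ hIdisj hJ₁ hJdisj hlt
      fun I₁' I₂' h₁ h₂ hdisj hunion ↦ hmax (I₁', I₂') ⟨h₁, h₂, hdisj, hunion⟩
    exact ⟨e, .inl heJ, he⟩
  · obtain ⟨e, heJ, heI, he⟩ := exists_unionIndep_insert_of_maximal_overlap hI₂ hI₁ hIdisj.symm hJ₂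
      hJdisj.symm hlt fun I₂' I₁' h₂ h₁ hdisj hunion ↦ by
        simpa only [add_comm] using hmax (I₁', I₂')
          ⟨h₁, h₂, hdisj.symm, by rwa [Set.union_comm, Set.union_comm I₁]⟩
    rw [Set.union_comm] at heI he
    exact ⟨e, .inr heJ, heI, unionIndep_comm.1 he⟩

/-- The union of two matroids on a finite type. -/
def matroidUnion (M N : Matroid α) : Matroid α :=
  (IndepMatroid.ofFinite (M.E ∪ N.E).toFinite (UnionIndep M N)
    ⟨∅, ∅, M.empty_indep, N.empty_indep, by simp, by simp⟩
    (by
      rintro I _ ⟨J₁, J₂, hJ₁, hJ₂, hdisj, rfl⟩ hI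
      exact ⟨I ∩ J₁, I ∩ J₂, hJ₁.inter_left _, hJ₂.inter_left _,
        hdisj.mono Set.inter_subset_right Set.inter_subset_right,
        by rw [← Set.inter_union_distrib_left, Set.inter_eq_left.2 hI]⟩)
    (fun _ _ ↦ UnionIndep.exists_insert_of_ncard_lt)
    (by
      rintro _ ⟨I₁, I₂, hI₁, hI₂, -, rfl⟩
      exact Set.union_subset_union hI₁.subset_ground hI₂.subset_ground)).matroid

lemma matroidUnion_indep_iff {I : Set α} :
    (matroidUnion M N).Indep I ↔
      ∃ I₁ I₂, M.Indep I₁ ∧ N.Indep I₂ ∧ Disjoint I₁ I₂ ∧ I₁ ∪ I₂ = I := Iff.rfl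

lemma matroidUnion_ground (M N : Matroid α) : (matroidUnion M N).E = M.E ∪ N.E := rfl

lemma matroidUnion_comm (M N : Matroid α) :
    matroidUnion M N = matroidUnion N M :=
  Matroid.ext_indep (Set.union_comm _ _) fun _ _ ↦ unionIndep_comm

lemma eRk_matroidUnion_le (M N : Matroid α) (X : Set α) :
    (matroidUnion M N).eRk X ≤ M.eRk X + N.eRk X := by
  refine Matroid.eRk_le_iff.2 fun I hIX hI ↦ ?_
  obtain ⟨I₁, I₂, hI₁, hI₂, hdisj, rfl⟩ := matroidUnion_indep_iff.1 hI
  rw [Set.union_subset_iff] at hIX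
  rw [Set.encard_union_eq hdisj]
  exact add_le_add (hI₁.encard_le_eRk_of_subset hIX.1) (hI₂.encard_le_eRk_of_subset hIX.2)

/-- The set `F` contains disjoint subsets spanning `D` in `M` and in `N`, respectively. -/
def SpansDisjointly (M N : Matroid α) (F D : Set α) : Prop :=
  ∃ F₁ F₂, F₁ ⊆ F ∧ F₂ ⊆ F ∧ Disjoint F₁ F₂ ∧ D ⊆ M.closure F₁ ∧ D ⊆ N.closure F₂

lemma SpansDisjointly.eRk_add_eRk_le (h : SpansDisjointly M N F D) :
    M.eRk D + N.eRk D ≤ (matroidUnion M N).eRk F := by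
  obtain ⟨F₁, F₂, hF₁, hF₂, hdisj, hD₁, hD₂⟩ := h
  obtain ⟨I₁, hI₁⟩ := M.exists_isBasis' F₁
  obtain ⟨I₂, hI₂⟩ := N.exists_isBasis' F₂
  have hIdisj : Disjoint I₁ I₂ := hdisj.mono hI₁.subset hI₂.subset
  have hI : (matroidUnion M N).Indep (I₁ ∪ I₂) :=
    matroidUnion_indep_iff.2 ⟨I₁, I₂, hI₁.indep, hI₂.indep, hIdisj, rfl⟩
  calc M.eRk D + N.eRk D ≤ M.eRk F₁ + N.eRk F₂ := by
        rw [← M.eRk_closure_eq F₁, ← N.eRk_closure_eq F₂]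
        exact add_le_add (M.eRk_mono hD₁) (N.eRk_mono hD₂)
    _ = (I₁ ∪ I₂).encard := by
        rw [Set.encard_union_eq hIdisj, hI₁.encard_eq_eRk, hI₂.encard_eq_eRk]
    _ ≤ (matroidUnion M N).eRk F := hI.encard_le_eRk_of_subset
        (Set.union_subset (hI₁.subset.trans hF₁) (hI₂.subset.trans hF₂))

lemma spansDisjointly_of_eRk_add_eRk_le (hFD : F ⊆ D) (hDM : D ⊆ M.E) (hDN : D ⊆ N.E)
    (h : M.eRk D + N.eRk D ≤ (matroidUnion M N).eRk F) : SpansDisjointly M N F D := by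
  obtain ⟨I, hI⟩ := (matroidUnion M N).exists_isBasis' F
  obtain ⟨I₁, I₂, hI₁, hI₂, hdisj, rfl⟩ := matroidUnion_indep_iff.1 hI.indep
  obtain ⟨hI₁F, hI₂F⟩ := Set.union_subset_iff.1 hI.subset
  rw [← hI.encard_eq_eRk, Set.encard_union_eq hdisj, ← hI₁.eRk_eq_encard,
    ← hI₂.eRk_eq_encard] at h
  have h₁ := M.eRk_mono (hI₁F.trans hFD)
  have h₂ := N.eRk_mono (hI₂F.trans hFD)
  have hfin₁ := (M.isRkFinite_of_finite I₁.toFinite).eRk_lt_top.ne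
  have hfin₂ := (N.isRkFinite_of_finite I₂.toFinite).eRk_lt_top.ne
  refine ⟨I₁, I₂, hI₁F, hI₂F, hdisj, ?_, ?_⟩
  · rw [(M.isRkFinite_of_finite I₁.toFinite).closure_eq_closure_of_subset_of_eRk_ge_eRk
      (hI₁F.trans hFD) (WithTop.le_of_add_le_add_right hfin₂ ((add_le_add_right h₂ _).trans h))]
    exact M.subset_closure D
  · rw [(N.isRkFinite_of_finite I₂.toFinite).closure_eq_closure_of_subset_of_eRk_ge_eRk
      (hI₂F.trans hFD) (WithTop.le_of_add_le_add_left hfin₁ ((add_le_add_left h₁ _).trans h))]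
    exact N.subset_closure D

lemma SpansDisjointly.subset_closure (h : SpansDisjointly M N F D) (hFD : F ⊆ D) :
    D ⊆ (matroidUnion M N).closure F := by
  have hD : D ⊆ M.E := by
    obtain ⟨F₁, F₂, -, -, -, hD₁, -⟩ := h
    exact hD₁.trans (M.closure_subset_ground F₁)
  rw [((matroidUnion M N).isRkFinite_of_finite
    F.toFinite).closure_eq_closure_of_subset_of_eRk_ge_eRk hFD
    ((eRk_matroidUnion_le M N D).trans h.eRk_add_eRk_le)]
  exact (matroidUnion M N).subset_closure D (hD.trans Set.subset_union_left)

end MatroidUnion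

section RigidSpan

variable {V : Type*} {M N : Matroid (Sym2 V)} {d : ℕ} {F : Set (Sym2 V)} {X : Finset V}

lemma mk_mem_star_iff {v x y : V} {Z : Finset V} :
    s(x, y) ∈ star v Z ↔ x = v ∧ y ∈ Z ∨ y = v ∧ x ∈ Z := by
  simp only [star, Set.mem_image, mem_coe, Sym2.eq_iff]
  grind

lemma IsRigidityMatroid.star_subset_closure (hM : IsRigidityMatroid M d)
    (hX : (X.sym2 : Set (Sym2 V)) ⊆ M.closure F) {z : V} {Z : Finset V} (hZX : Z ⊆ X)
    (hZ : d ≤ #Z) (hstar : star z Z ⊆ M.closure F) : star z X ⊆ M.closure F := by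
  classical
  rintro _ ⟨b, hb, rfl⟩
  obtain rfl | hzb := eq_or_ne z b
  · exact hM.diag_mem_closure F z
  obtain ⟨Y, hYZ, hY⟩ := exists_subset_card_eq hZ
  by_cases hbY : b ∈ Y
  · exact hstar ⟨b, hYZ hbY, rfl⟩
  by_cases hzY : z ∈ Y
  · exact hX (mk_mem_sym2_iff.2 ⟨hZX (hYZ hzY), hb⟩)
  refine hM.mem_closure_of_clique (Z := insert z (insert b Y)) ?_ (by simp) (by simp) ?_
  · rw [card_insert_of_notMem (by simp [hzb, hzY]), card_insert_of_notMem hbY, hY]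
  have hbYX : insert b Y ⊆ X := insert_subset hb (hYZ.trans hZX)
  have hz : ∀ i ∈ insert z (insert b Y), s(z, i) ≠ s(z, b) → s(z, i) ∈ M.closure F := by
    intro i hi hne
    obtain rfl | rfl | hiY : i = z ∨ i = b ∨ i ∈ Y := by simpa using hi
    · exact hM.diag_mem_closure F i
    · exact absurd rfl hne
    · exact hstar ⟨i, hYZ hiY, rfl⟩
  intro i hi j hj hij
  obtain rfl | hi' := mem_insert.1 hi
  · exact hz j hj hij
  obtain rfl | hj' := mem_insert.1 hj
  · rw [Sym2.eq_swap] at hij ⊢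
    exact hz i hi hij
  · exact hX (mk_mem_sym2_iff.2 ⟨hbYX hi', hbYX hj'⟩)

lemma sym2_insert_subset_of_star_subset [DecidableEq V] {C : Set (Sym2 V)} {z : V}
    (hX : (X.sym2 : Set (Sym2 V)) ⊆ C) (hz : star z (insert z X) ⊆ C) :
    ((insert z X).sym2 : Set (Sym2 V)) ⊆ C := by
  intro e he
  induction e with
  | h x y =>
    obtain ⟨hx, hy⟩ := mk_mem_sym2_iff.1 he
    obtain rfl | hx' := mem_insert.1 hx
    · exact hz ⟨y, hy, rfl⟩
    obtain rfl | hy' := mem_insert.1 hy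
    · exact hz ⟨x, hx, Sym2.eq_swap⟩
    · exact hX (mk_mem_sym2_iff.2 ⟨hx', hy'⟩)

lemma IsRigidityMatroid.sym2_insert_subset_closure [DecidableEq V] (hM : IsRigidityMatroid M d)
    (hX : (X.sym2 : Set (Sym2 V)) ⊆ M.closure F) {z : V} {Z : Finset V} (hZX : Z ⊆ X)
    (hZ : d ≤ #Z) (hstar : star z Z ⊆ M.closure F) :
    ((insert z X).sym2 : Set (Sym2 V)) ⊆ M.closure F := by
  refine sym2_insert_subset_of_star_subset hX ?_
  rintro _ ⟨w, hw, rfl⟩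
  obtain rfl | hw := mem_insert.1 hw
  · exact hM.diag_mem_closure F w
  · exact hM.star_subset_closure hX hZX hZ hstar ⟨w, hw, rfl⟩

lemma IsRigidityMatroid.sym2_union_subset_closure [DecidableEq V] (hM : IsRigidityMatroid M d)
    (hX : (X.sym2 : Set (Sym2 V)) ⊆ M.closure F) {Y : Finset V}
    (hY : ∀ z ∈ Y, ∃ Z ⊆ X, d ≤ #Z ∧ star z Z ⊆ M.closure F) :
    ((X ∪ Y).sym2 : Set (Sym2 V)) ⊆ M.closure F := by
  induction Y using Finset.induction_on with
  | empty => simpa using hX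
  | insert z Y _ ih =>
    obtain ⟨Z, hZX, hZ, hstar⟩ := hY z (mem_insert_self z Y)
    rw [union_insert]
    exact hM.sym2_insert_subset_closure (ih fun w hw ↦ hY w (mem_insert_of_mem hw))
      (hZX.trans subset_union_left) hZ hstar

variable {A B : Finset V} {a b : V}

lemma IsRigidityMatroid.sym2_union_subset_closure_doubleStar [DecidableEq V]
    (hM : IsRigidityMatroid M 1) (hb : b ∈ B) :
    ((A ∪ B).sym2 : Set (Sym2 V)) ⊆ M.closure (star a B ∪ star b A) := by
  have hsub : star a B ∪ star b A ⊆ M.closure (star a B ∪ star b A) :=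
    M.subset_closure _ (by simp [hM.ground_eq])
  have haB : (({a} ∪ B).sym2 : Set (Sym2 V)) ⊆ M.closure (star a B ∪ star b A) := by
    refine hM.sym2_union_subset_closure (by simp [Sym2.diag, hM.diag_mem_closure])
      fun z hz ↦ ⟨{a}, subset_rfl, by simp, fun e he ↦ ?_⟩
    obtain rfl : e = s(z, a) := by simpa [star] using he
    exact hsub (.inl ⟨z, hz, Sym2.eq_swap⟩)
  have hall := hM.sym2_union_subset_closure haB (Y := A) fun z hz ↦
    ⟨{b}, by simp [hb], by simp, fun e he ↦ by
      obtain rfl : e = s(z, b) := by simpa [star] using he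
      exact hsub (.inr ⟨z, hz, Sym2.eq_swap⟩)⟩
  refine subset_trans (coe_subset.2 (sym2_mono ?_)) hall
  grind

lemma IsRigidityMatroid.sym2_union_subset_closure_of_compl_doubleStar [DecidableEq V]
    (hM : IsRigidityMatroid M d) (hAB : Disjoint A B) (ha : a ∈ A) (hb : b ∈ B) (hA : d < #A)
    (hB : d < #B)
    (hF : ((A ∪ B).sym2 : Set (Sym2 V)) \ (star a B ∪ star b A) ⊆ M.closure F) :
    ((A ∪ B).sym2 : Set (Sym2 V)) ⊆ M.closure F := by
  have hmem : ∀ x ∈ A ∪ B, ∀ y ∈ A ∪ B, s(x, y) ∉ star a B ∪ star b A → s(x, y) ∈ M.closure F :=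
    fun x hx y hy hxy ↦ hF ⟨mk_mem_sym2_iff.2 ⟨hx, hy⟩, hxy⟩
  simp only [Set.mem_union, mk_mem_star_iff] at hmem
  have hAB' : ∀ x ∈ A, x ∉ B := fun _ hx ↦ disjoint_left.1 hAB hx
  have hAF : (A.sym2 : Set (Sym2 V)) ⊆ M.closure F := by
    intro e he
    induction e with
    | h x y =>
      obtain ⟨hx, hy⟩ := mk_mem_sym2_iff.1 he
      exact hmem x (by grind) y (by grind) (by grind)
  have hBb : ((A ∪ B.erase b).sym2 : Set (Sym2 V)) ⊆ M.closure F := by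
    refine hM.sym2_union_subset_closure hAF fun z hz ↦ ⟨A.erase a, erase_subset a A, ?_, ?_⟩
    · rw [card_erase_of_mem ha]; lia
    · rintro _ ⟨w, hw, rfl⟩
      exact hmem z (by grind) w (by grind) (by grind)
  have hall := hM.sym2_insert_subset_closure hBb (z := b) (Z := B.erase b) subset_union_right
    (by rw [card_erase_of_mem hb]; lia) (by
      rintro _ ⟨w, hw, rfl⟩
      exact hmem b (by grind) w (by grind) (by grind))
  rwa [← union_insert, insert_erase hb] at hall

end RigidSpan

section ClosedGraph

variable {V : Type*} {M N : Matroid (Sym2 V)} {k : ℕ} {G : SimpleGraph V} {X : Finset V}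

/-- The edges of `G` with both ends in `X`. -/
def edgesOn (G : SimpleGraph V) (X : Finset V) : Set (Sym2 V) := G.edgeSet ∩ X.sym2

lemma mk_mem_edgesOn_iff {x y : V} : s(x, y) ∈ edgesOn G X ↔ G.Adj x y ∧ x ∈ X ∧ y ∈ X := by
  simp [edgesOn]

lemma edgesOn_mono {Y : Finset V} (hXY : X ⊆ Y) : edgesOn G X ⊆ edgesOn G Y :=
  Set.inter_subset_inter_right _ (coe_subset.2 (sym2_mono hXY))

lemma notMem_of_mem_edgesOn {v : V} (hv : v ∉ X) {e : Sym2 V} (he : e ∈ edgesOn G X) : v ∉ e :=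
  fun hve ↦ hv (mem_sym2_iff.1 he.2 v hve)

lemma star_subset_edgesOn_insert [DecidableEq V] {v : V} {Z : Finset V} (hZX : Z ⊆ X)
    (hZ : ∀ z ∈ Z, G.Adj v z) : star v Z ⊆ edgesOn G (insert v X) := by
  rintro _ ⟨z, hz, rfl⟩
  exact mk_mem_edgesOn_iff.2 ⟨hZ z hz, mem_insert_self v X, mem_insert_of_mem (hZX hz)⟩

lemma disjoint_star_star {v : V} {Y Z : Finset V} (h : Disjoint Y Z) :
    Disjoint (star v Y) (star v Z) :=
  (Set.disjoint_image_iff fun _ _ hxy ↦ Sym2.congr_right.1 hxy).2 (mod_cast h)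

lemma disjoint_star_of_forall_notMem {v : V} {Z : Finset V} {I : Set (Sym2 V)}
    (hI : ∀ e ∈ I, v ∉ e) : Disjoint I (star v Z) := by
  rw [Set.disjoint_right]
  rintro _ ⟨z, -, rfl⟩ hz
  exact hI _ hz (Sym2.mem_mk_left v z)

lemma spansDisjointly_of_isClique (hM : IsRigidityMatroid M k) (hN : IsRigidityMatroid N 1)
    (hX : G.IsClique X) (hcard : 2 * k + 2 ≤ #X) :
    SpansDisjointly M N (edgesOn G X) X.sym2 := by
  classical
  obtain ⟨A, hAX, hA⟩ := exists_subset_card_eq (show k + 1 ≤ #X by lia)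
  obtain ⟨B, rfl, hAB⟩ : ∃ B, A ∪ B = X ∧ Disjoint A B :=
    ⟨X \ A, union_sdiff_of_subset hAX, disjoint_sdiff⟩
  rw [card_union_of_disjoint hAB] at hcard
  obtain ⟨a, ha⟩ : A.Nonempty := card_pos.1 (by lia)
  obtain ⟨b, hb⟩ : B.Nonempty := card_pos.1 (by lia)
  refine ⟨edgesOn G (A ∪ B) \ (star a B ∪ star b A), star a B ∪ star b A, Set.sdiff_subset, ?_,
    Set.disjoint_sdiff_left, ?_, hN.sym2_union_subset_closure_doubleStar hb⟩
  · have hadj : ∀ x ∈ A, ∀ y ∈ B, G.Adj x y := fun x hx y hy ↦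
      hX (by simp [hx]) (by simp [hy]) (disjoint_iff_ne.1 hAB x hx y hy)
    rintro _ (⟨y, hy, rfl⟩ | ⟨x, hx, rfl⟩)
    · exact mk_mem_edgesOn_iff.2 ⟨hadj a ha y hy, by simp [ha], by simp [mem_coe.1 hy]⟩
    · exact mk_mem_edgesOn_iff.2 ⟨(hadj x hx b hb).symm, by simp [hb], by simp [mem_coe.1 hx]⟩
  · refine hM.sym2_union_subset_closure_of_compl_doubleStar hAB ha hb (by lia) (by lia) ?_
    rintro e ⟨he, he'⟩
    induction e with
    | h x y =>
      obtain rfl | hxy := eq_or_ne x y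
      · exact hM.diag_mem_closure _ x
      obtain ⟨hx, hy⟩ := mk_mem_sym2_iff.1 he
      exact M.mem_closure_of_mem' ⟨mk_mem_edgesOn_iff.2 ⟨hX hx hy hxy, hx, hy⟩, he'⟩
        (by simp [hM.ground_eq])

lemma spansDisjointly_insert [DecidableEq V] (hM : IsRigidityMatroid M k)
    (hN : IsRigidityMatroid N 1) (hX : SpansDisjointly M N (edgesOn G X) X.sym2) {z : V}
    (hz : z ∉ X) {Z : Finset V} (hZX : Z ⊆ X) (hZ : ∀ w ∈ Z, G.Adj z w) (hcard : k + 1 ≤ #Z) :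
    SpansDisjointly M N (edgesOn G (insert z X)) (insert z X).sym2 := by
  obtain ⟨F₁, F₂, hF₁, hF₂, hdisj, hXF₁, hXF₂⟩ := hX
  obtain ⟨Y, hYZ, hY⟩ := exists_subset_card_eq (show k ≤ #Z by lia)
  have hY' : 1 ≤ #(Z \ Y) := by rw [card_sdiff_of_subset hYZ]; lia
  have hF₁z : ∀ e ∈ F₁, z ∉ e := fun e he ↦ notMem_of_mem_edgesOn hz (hF₁ he)
  have hF₂z : ∀ e ∈ F₂, z ∉ e := fun e he ↦ notMem_of_mem_edgesOn hz (hF₂ he)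
  have hmono : edgesOn G X ⊆ edgesOn G (insert z X) := edgesOn_mono (subset_insert z X)
  have hYX : Y ⊆ X := hYZ.trans hZX
  have hY'X : Z \ Y ⊆ X := sdiff_subset.trans hZX
  refine ⟨F₁ ∪ star z Y, F₂ ∪ star z (Z \ Y),
    Set.union_subset (hF₁.trans hmono)
      (star_subset_edgesOn_insert hYX fun w hw ↦ hZ w (hYZ hw)),
    Set.union_subset (hF₂.trans hmono)
      (star_subset_edgesOn_insert hY'X fun w hw ↦ hZ w (mem_sdiff.1 hw).1), ?_, ?_, ?_⟩
  · rw [Set.disjoint_union_left, Set.disjoint_union_right, Set.disjoint_union_right]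
    exact ⟨⟨hdisj, disjoint_star_of_forall_notMem hF₁z⟩,
      (disjoint_star_of_forall_notMem hF₂z).symm, disjoint_star_star disjoint_sdiff⟩
  · exact hM.sym2_insert_subset_closure
      (hXF₁.trans (M.closure_subset_closure Set.subset_union_left)) hYX hY.ge
      (Set.subset_union_right.trans (M.subset_closure _ (by simp [hM.ground_eq])))
  · exact hN.sym2_insert_subset_closure
      (hXF₂.trans (N.closure_subset_closure Set.subset_union_left)) hY'X hY'
      (Set.subset_union_right.trans (N.subset_closure _ (by simp [hN.ground_eq])))

/-- Every edge spanned by `G` in the matroid `U` belongs to `G`. -/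
def IsClosedGraph (U : Matroid (Sym2 V)) (G : SimpleGraph V) : Prop :=
  ∀ ⦃x y⦄, x ≠ y → s(x, y) ∈ U.closure G.edgeSet → G.Adj x y

lemma exists_isClosedGraph {U : Matroid (Sym2 V)} (hU : U.E = Set.univ) (G : SimpleGraph V) :
    ∃ H, G ≤ H ∧ IsClosedGraph U H ∧ U.eRk H.edgeSet = U.eRk G.edgeSet := by
  have hle : (SimpleGraph.fromEdgeSet (U.closure G.edgeSet)).edgeSet ⊆ U.closure G.edgeSet := by
    rw [SimpleGraph.edgeSet_fromEdgeSet]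
    exact Set.sdiff_subset
  have hG : G ≤ SimpleGraph.fromEdgeSet (U.closure G.edgeSet) := fun _ _ hxy ↦
    ⟨U.mem_closure_of_mem' hxy (by simp [hU]), hxy.ne⟩
  refine ⟨_, hG, fun x y hxy h ↦ ⟨U.closure_subset_closure_of_subset_closure hle h, hxy⟩,
    le_antisymm ?_ (U.eRk_mono (SimpleGraph.edgeSet_mono hG))⟩
  rw [← U.eRk_closure_eq G.edgeSet]
  exact U.eRk_mono hle

/-- A vertex with `k + 1` neighbours in a clique on at least `2 * k + 2` vertices is adjacent to the
whole clique. For graphs closed in the union of the `k`-dimensional and the `1`-dimensional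
rigidity matroid, this is the only consequence of closedness that the counting argument needs. -/
def CliqueAbsorbing (G : SimpleGraph V) (k : ℕ) : Prop :=
  ∀ ⦃K Z : Finset V⦄ ⦃z : V⦄, G.IsClique K → 2 * k + 2 ≤ #K → Z ⊆ K → (∀ w ∈ Z, G.Adj z w) →
    k + 1 ≤ #Z → ∀ w ∈ K, w ≠ z → G.Adj z w

variable [Finite V]

lemma IsClosedGraph.isClique_of_spansDisjointly (hG : IsClosedGraph (matroidUnion M N) G)
    (hX : SpansDisjointly M N (edgesOn G X) X.sym2) : G.IsClique X := fun _ hx _ hy hxy ↦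
  hG hxy ((matroidUnion M N).closure_subset_closure Set.inter_subset_left
    (hX.subset_closure Set.inter_subset_right (mk_mem_sym2_iff.2 ⟨hx, hy⟩)))

lemma IsClosedGraph.cliqueAbsorbing (hM : IsRigidityMatroid M k) (hN : IsRigidityMatroid N 1)
    (hG : IsClosedGraph (matroidUnion M N) G) : CliqueAbsorbing G k := by
  classical
  intro K Z z hK hKcard hZK hZ hZcard w hw hwz
  by_cases hz : z ∈ K
  · exact hK hz hw hwz.symm
  · have hspan := spansDisjointly_insert hM hN (spansDisjointly_of_isClique hM hN hK hKcard) hz hZK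
      hZ hZcard
    exact hG.isClique_of_spansDisjointly hspan (by simp) (by simp [hw]) hwz.symm

end ClosedGraph

section RankIncrement

variable {V : Type*} {M N : Matroid (Sym2 V)} {d₁ d₂ : ℕ} {G : SimpleGraph V}
  {Y B : Finset V} {v : V}

lemma encard_star (v : V) (Z : Finset V) : (star v Z).encard = #Z := by
  have hinj : Function.Injective fun z ↦ s(v, z) := fun _ _ h ↦ Sym2.congr_right.1 h
  rw [star, hinj.encard_image, Set.encard_coe_eq_coe_finsetCard]

variable [Finite V]

lemma encard_add_card_le_eRk_edgesOn_insert [DecidableEq V] (hv : v ∉ Y) {I₁ I₂ : Set (Sym2 V)}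
    (hI₁ : I₁ ⊆ edgesOn G Y) (hI₂ : I₂ ⊆ edgesOn G Y) (hI : Disjoint I₁ I₂) {Z₁ Z₂ : Finset V}
    (hZ₁ : Z₁ ⊆ Y) (hZ₂ : Z₂ ⊆ Y) (hvZ₁ : ∀ z ∈ Z₁, G.Adj v z) (hvZ₂ : ∀ z ∈ Z₂, G.Adj v z)
    (hZ : Disjoint Z₁ Z₂) (hM : M.Indep (I₁ ∪ star v Z₁)) (hN : N.Indep (I₂ ∪ star v Z₂)) :
    (I₁ ∪ I₂).encard + (#Z₁ + #Z₂ : ℕ) ≤ (matroidUnion M N).eRk (edgesOn G (insert v Y)) := by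
  have hmono : edgesOn G Y ⊆ edgesOn G (insert v Y) := edgesOn_mono (subset_insert v Y)
  have hI₁v (Z : Finset V) : Disjoint I₁ (star v Z) :=
    disjoint_star_of_forall_notMem fun e he ↦ notMem_of_mem_edgesOn hv (hI₁ he)
  have hI₂v (Z : Finset V) : Disjoint I₂ (star v Z) :=
    disjoint_star_of_forall_notMem fun e he ↦ notMem_of_mem_edgesOn hv (hI₂ he)
  have hdisj : Disjoint (I₁ ∪ star v Z₁) (I₂ ∪ star v Z₂) := by
    rw [Set.disjoint_union_left, Set.disjoint_union_right, Set.disjoint_union_right]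
    exact ⟨⟨hI, hI₁v Z₂⟩, (hI₂v Z₁).symm, disjoint_star_star hZ⟩
  have hindep : (matroidUnion M N).Indep (I₁ ∪ star v Z₁ ∪ (I₂ ∪ star v Z₂)) :=
    matroidUnion_indep_iff.2 ⟨_, _, hM, hN, hdisj, rfl⟩
  calc (I₁ ∪ I₂).encard + (#Z₁ + #Z₂ : ℕ)
      = (I₁ ∪ star v Z₁ ∪ (I₂ ∪ star v Z₂)).encard := by
        rw [Set.encard_union_eq hdisj, Set.encard_union_eq (hI₁v Z₁), Set.encard_union_eq (hI₂v Z₂),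
          Set.encard_union_eq hI, encard_star, encard_star, Nat.cast_add]
        ac_rfl
    _ ≤ (matroidUnion M N).eRk (edgesOn G (insert v Y)) := by
        refine hindep.encard_le_eRk_of_subset (Set.union_subset ?_ ?_)
        · exact Set.union_subset (hI₁.trans hmono) (star_subset_edgesOn_insert hZ₁ hvZ₁)
        · exact Set.union_subset (hI₂.trans hmono) (star_subset_edgesOn_insert hZ₂ hvZ₂)

lemma eRk_edgesOn_add_min_le [DecidableEq V] (hM : IsRigidityMatroid M d₁)
    (hN : IsRigidityMatroid N d₂) (hv : v ∉ Y) (hBY : B ⊆ Y) (hvB : ∀ z ∈ B, G.Adj v z) :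
    (matroidUnion M N).eRk (edgesOn G Y) + (min (d₁ + d₂) #B : ℕ) ≤
      (matroidUnion M N).eRk (edgesOn G (insert v Y)) := by
  obtain ⟨J, hJ⟩ := (matroidUnion M N).exists_isBasis' (edgesOn G Y)
  obtain ⟨I₁, I₂, hI₁, hI₂, hI, rfl⟩ := matroidUnion_indep_iff.1 hJ.indep
  obtain ⟨hI₁Y, hI₂Y⟩ := Set.union_subset_iff.1 hJ.subset
  obtain ⟨Z₁, hZ₁, hZ₁card⟩ := exists_subset_card_eq (min_le_right d₁ #B)
  obtain ⟨Z₂, hZ₂, hZ₂card⟩ := exists_subset_card_eq (show min d₂ (#B - d₁) ≤ #(B \ Z₁) by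
    rw [card_sdiff_of_subset hZ₁]; lia)
  have hZ₂B : Z₂ ⊆ B := hZ₂.trans sdiff_subset
  have hmin : min (d₁ + d₂) #B = #Z₁ + #Z₂ := by lia
  rw [← hJ.encard_eq_eRk, hmin]
  refine encard_add_card_le_eRk_edgesOn_insert hv hI₁Y hI₂Y hI (hZ₁.trans hBY) (hZ₂B.trans hBY)
    (fun z hz ↦ hvB z (hZ₁ hz)) (fun z hz ↦ hvB z (hZ₂B hz)) (disjoint_sdiff.mono_right hZ₂)
    (hM.indep_zeroExtension hI₁ (fun e he ↦ notMem_of_mem_edgesOn hv (hI₁Y he))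
      (fun h ↦ hv (hBY (hZ₁ h))) (by lia))
    (hN.indep_zeroExtension hI₂ (fun e he ↦ notMem_of_mem_edgesOn hv (hI₂Y he))
      (fun h ↦ hv (hBY (hZ₂B h))) (by lia))

lemma encard_insert_add_le_eRk_edgesOn_insert [DecidableEq V] (hM : IsRigidityMatroid M d₁)
    (hN : IsRigidityMatroid N d₂) (hd₁ : 0 < d₁) (hv : v ∉ Y) (hBY : B ⊆ Y)
    (hvB : ∀ z ∈ B, G.Adj v z) (hBcard : d₁ + d₂ + 1 ≤ #B) {x y : V} (hx : x ∈ B) (hy : y ∈ B)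
    {I₁ I₂ : Set (Sym2 V)} (hI₁Y : I₁ ⊆ edgesOn G Y) (hI₂Y : I₂ ⊆ edgesOn G Y)
    (hI : Disjoint I₁ I₂) (hxyI₁ : s(x, y) ∉ I₁) (hI₁ : M.Indep (insert s(x, y) I₁))
    (hI₂ : N.Indep I₂) :
    (I₁ ∪ I₂).encard + (d₁ + d₂ + 1 : ℕ) ≤
      (matroidUnion M N).eRk (edgesOn G (insert v Y)) := by
  obtain ⟨Z₁, hxyZ₁, hZ₁, hZ₁card⟩ := exists_subsuperset_card_eq
    (show {x, y} ⊆ B by grind) (card_le_two.trans (show 2 ≤ d₁ + 1 by lia)) (by lia)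
  obtain ⟨Z₂, hZ₂, hZ₂card⟩ := exists_subset_card_eq (show d₂ ≤ #(B \ Z₁) by
    rw [card_sdiff_of_subset hZ₁]; lia)
  have hZ₂B : Z₂ ⊆ B := hZ₂.trans sdiff_subset
  have hcard : d₁ + d₂ + 1 = #Z₁ + #Z₂ := by lia
  rw [hcard]
  exact encard_add_card_le_eRk_edgesOn_insert hv hI₁Y hI₂Y hI (hZ₁.trans hBY) (hZ₂B.trans hBY)
    (fun z hz ↦ hvB z (hZ₁ hz)) (fun z hz ↦ hvB z (hZ₂B hz)) (disjoint_sdiff.mono_right hZ₂)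
    (hM.indep_oneExtension hI₁ hxyI₁ (fun e he ↦ notMem_of_mem_edgesOn hv (hI₁Y he))
      (fun h ↦ hv (hBY (hZ₁ h))) (hxyZ₁ (by simp)) (hxyZ₁ (by simp)) hZ₁card.le)
    (hN.indep_zeroExtension hI₂ (fun e he ↦ notMem_of_mem_edgesOn hv (hI₂Y he))
      (fun h ↦ hv (hBY (hZ₂B h))) hZ₂card.le)

lemma IsClosedGraph.eRk_edgesOn_add_le [DecidableEq V] (hM : IsRigidityMatroid M d₁)
    (hN : IsRigidityMatroid N d₂) (hd₁ : 0 < d₁) (hd₂ : 0 < d₂)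
    (hG : IsClosedGraph (matroidUnion M N) G) (hv : v ∉ Y) (hBY : B ⊆ Y)
    (hvB : ∀ z ∈ B, G.Adj v z) (hBcard : d₁ + d₂ + 1 ≤ #B) (hB : ¬ G.IsClique B) :
    (matroidUnion M N).eRk (edgesOn G Y) + (d₁ + d₂ + 1 : ℕ) ≤
      (matroidUnion M N).eRk (edgesOn G (insert v Y)) := by
  obtain ⟨x, hx, y, hy, hxy, hadj⟩ : ∃ x ∈ B, ∃ y ∈ B, x ≠ y ∧ ¬ G.Adj x y := by
    simpa [SimpleGraph.IsClique, Set.Pairwise] using hB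
  obtain ⟨J, hJ⟩ := (matroidUnion M N).exists_isBasis' (edgesOn G Y)
  have hJxy : s(x, y) ∉ (matroidUnion M N).closure J := fun h ↦ hadj <| hG hxy <|
    (matroidUnion M N).closure_subset_closure (hJ.subset.trans Set.inter_subset_left) h
  obtain ⟨hindep, hxyJ⟩ := (hJ.indep.notMem_closure_iff
    (by simp [matroidUnion_ground, hM.ground_eq])).1 hJxy
  obtain ⟨F₁, F₂, hF₁, hF₂, hF, hFJ⟩ := matroidUnion_indep_iff.1 hindep
  rw [← hJ.encard_eq_eRk]
  wlog hxyF₁ : s(x, y) ∈ F₁ generalizing M N d₁ d₂ F₁ F₂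
  · have hxyF₂ : s(x, y) ∈ F₂ := by
      have : s(x, y) ∈ F₁ ∪ F₂ := hFJ ▸ Set.mem_insert _ _
      exact this.resolve_left hxyF₁
    rw [matroidUnion_comm, add_comm d₁] at *
    exact this hN hM hd₂ hd₁ hG hBcard hJ hJxy hindep F₂ F₁ hF₂ hF₁ hF.symm
      (Set.union_comm F₁ F₂ ▸ hFJ) hxyF₂
  have hxyF₂ : s(x, y) ∉ F₂ := Set.disjoint_left.1 hF hxyF₁
  have hJeq : F₁ \ {s(x, y)} ∪ F₂ = J := by
    rw [← Set.sdiff_singleton_eq_self hxyF₂, ← Set.union_sdiff_distrib, hFJ,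
      Set.insert_sdiff_self_of_notMem hxyJ]
  have hsub := Set.union_subset_iff.1 (hJeq.trans_subset hJ.subset)
  rw [← hJeq]
  exact encard_insert_add_le_eRk_edgesOn_insert hM hN hd₁ hv hBY hvB hBcard hx hy hsub.1 hsub.2
    (hF.mono_left Set.sdiff_subset) (by simp) (by rwa [Set.insert_sdiff_singleton,
      Set.insert_eq_of_mem hxyF₁]) hF₂

lemma eRk_edgesOn_le (hM : IsRigidityMatroid M d₁) (hN : IsRigidityMatroid N d₂)
    (X : Finset V) : (matroidUnion M N).eRk (edgesOn G X) ≤ ((d₁ + d₂) * #X : ℕ) := by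
  rw [add_mul, Nat.cast_add]
  calc (matroidUnion M N).eRk (edgesOn G X)
      ≤ (matroidUnion M N).eRk X.sym2 := Matroid.eRk_mono _ Set.inter_subset_right
    _ ≤ M.eRk X.sym2 + N.eRk X.sym2 := eRk_matroidUnion_le M N _
    _ ≤ (d₁ * #X : ℕ) + (d₂ * #X : ℕ) := add_le_add (hM.eRk_sym2_le X) (hN.eRk_sym2_le X)

end RankIncrement

section Ordering

variable {V : Type*} [Fintype V] {N X : Finset V} {v : V}

/-- A linear ordering of the vertices. -/
abbrev VertexOrder (V : Type*) [Fintype V] : Type _ := V ≃ Fin (Fintype.card V)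

/-- The members of `N` that precede `v` in the ordering `p`. -/
def below (p : VertexOrder V) (N : Finset V) (v : V) : Finset V := {u ∈ N | p u < p v}

lemma mem_below_iff {p : VertexOrder V} {u : V} : u ∈ below p N v ↔ u ∈ N ∧ p u < p v := by
  simp [below]

lemma below_subset (p : VertexOrder V) (N : Finset V) (v : V) : below p N v ⊆ N :=
  filter_subset _ _

lemma notMem_below_self (p : VertexOrder V) (N : Finset V) (v : V) : v ∉ below p N v := by
  simp [below]

lemma card_below_trans (σ : Equiv.Perm V) (p : VertexOrder V) (N : Finset V) (v : V) :
    #(below (σ.trans p) N v) = #(below p (N.map σ.toEmbedding) (σ v)) := by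
  rw [below, below, filter_map, card_map]
  rfl

lemma below_insert_self [DecidableEq V] (p : VertexOrder V) (N : Finset V) (v : V) :
    below p (insert v N) v = below p N v := by
  simp [below, filter_insert]

lemma below_insert_of_forall_le [DecidableEq V] {p : VertexOrder V} (hX : ∀ u ∈ X, p u ≤ p v)
    (hv : v ∉ X) : below p (insert v X) v = X := by
  rw [below_insert_self]
  exact filter_true_of_mem fun u hu ↦
    (hX u hu).lt_of_ne (p.injective.ne fun h ↦ hv (h ▸ hu))

lemma below_insert_of_le [DecidableEq V] {p : VertexOrder V} {u : V} (h : p u ≤ p v) :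
    below p (insert v X) u = below p X u := by
  rw [below, below, filter_insert, if_neg h.not_gt]

lemma sum_comp_card_below (p : VertexOrder V) (X : Finset V) (f : ℕ → ℕ) :
    ∑ v ∈ X, f #(below p X v) = ∑ j ∈ range #X, f j := by
  classical
  induction X using Finset.induction_on_max_value p with
  | empty => simp
  | insert a X ha hmax ih =>
    rw [sum_insert ha, below_insert_of_forall_le hmax ha, card_insert_of_notMem ha,
      sum_range_succ, ← ih, add_comm]
    congr 1
    exact sum_congr rfl fun v hv ↦ by rw [below_insert_of_le (hmax v hv)]

variable [DecidableEq V]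

lemma sum_le_of_forall_below (p : VertexOrder V) (r : Finset V → ℕ) (g : V → ℕ)
    (h : ∀ v ∈ X, r (below p X v) + g v ≤ r (insert v (below p X v))) : ∑ v ∈ X, g v ≤ r X := by
  induction X using Finset.induction_on_max_value p with
  | empty => simp
  | insert a X ha hmax ih =>
    have hX : ∑ v ∈ X, g v ≤ r X := ih fun v hv ↦ by
      simpa only [below_insert_of_le (hmax v hv)] using h v (mem_insert_of_mem hv)
    have ha' := h a (mem_insert_self a X)
    rw [below_insert_of_forall_le hmax ha] at ha'
    rw [sum_insert ha]
    lia

lemma sum_comp_card_below_eq_of_mem (f : ℕ → ℕ) {w : V} (hv : v ∈ X) (hw : w ∈ X) :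
    ∑ p : VertexOrder V, f #(below p X w) = ∑ p : VertexOrder V, f #(below p X v) := by
  have hmap : X.map (Equiv.swap v w).toEmbedding = X := by
    refine map_perm fun u hu ↦ ?_
    obtain ⟨-, rfl | rfl⟩ := Equiv.swap_apply_ne_self_iff.1 hu <;> assumption
  refine Fintype.sum_equiv ((Equiv.swap v w).equivCongr (Equiv.refl _)) _ _ fun p ↦ ?_
  have hp : (Equiv.swap v w).equivCongr (Equiv.refl _) p = (Equiv.swap v w).trans p := rfl
  rw [hp, card_below_trans, hmap, Equiv.swap_apply_left]

lemma card_add_one_mul_sum_comp_card_below (f : ℕ → ℕ) (hv : v ∉ N) :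
    (#N + 1) * ∑ p : VertexOrder V, f #(below p N v) =
      Fintype.card (VertexOrder V) * ∑ j ∈ range (#N + 1), f j := by
  have hcard : #(insert v N) = #N + 1 := card_insert_of_notMem hv
  calc (#N + 1) * ∑ p : VertexOrder V, f #(below p N v)
      = ∑ w ∈ insert v N, ∑ p : VertexOrder V, f #(below p (insert v N) w) := by
        rw [sum_congr rfl fun w hw ↦ sum_comp_card_below_eq_of_mem f (mem_insert_self v N) hw]
        simp only [below_insert_self, sum_const, hcard, smul_eq_mul]
    _ = ∑ p : VertexOrder V, ∑ j ∈ range (#N + 1), f j := by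
        rw [sum_comm]
        exact sum_congr rfl fun p _ ↦ by rw [sum_comp_card_below, hcard]
    _ = Fintype.card (VertexOrder V) * ∑ j ∈ range (#N + 1), f j := by simp

lemma below_swap_trans {p : VertexOrder V} {y z : V} (hv : v ∉ N) (hz : z ∈ N)
    (hzB : z ∉ below p N v) (hyB : y ∈ below p N v) :
    below ((Equiv.swap y z).trans p) N v = insert z ((below p N v).erase y) := by
  obtain ⟨hy, hyv⟩ := mem_below_iff.1 hyB
  have hzv : ¬ p z < p v := fun h ↦ hzB (mem_below_iff.2 ⟨hz, h⟩)
  have hyz : y ≠ z := by rintro rfl; exact hzB hyB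
  have hv' : Equiv.swap y z v = v := Equiv.swap_apply_of_ne_of_ne (by grind) (by grind)
  ext u
  rw [mem_below_iff, Equiv.trans_apply, Equiv.trans_apply, hv', mem_insert, mem_erase,
    mem_below_iff]
  obtain rfl | huy := eq_or_ne u y
  · simp [hzv, hyz]
  obtain rfl | huz := eq_or_ne u z
  · simp [hz, hyv]
  · simp [Equiv.swap_apply_of_ne_of_ne huy huz, huy, huz]

end Ordering

section CliqueExchange

variable {V : Type*} [DecidableEq V] {G : SimpleGraph V} {k : ℕ} {N B C : Finset V} {v z : V}

lemma isClique_coe_insert (hB : G.IsClique B) (hz : ∀ b ∈ B, z ≠ b → G.Adj z b) :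
    G.IsClique (insert z B : Finset V) := by
  rw [coe_insert]
  exact hB.insert hz

lemma CliqueAbsorbing.exists_not_isClique_insert (hG : CliqueAbsorbing G k)
    (hN : ∀ u ∈ N, G.Adj v u) (hNclique : ¬ G.IsClique N) (hBN : B ⊆ N) (hB : G.IsClique B)
    (hcard : 2 * k + 1 ≤ #B) : ∃ z ∈ N, z ∉ B ∧ ¬ G.IsClique (insert z B : Finset V) := by
  by_contra! hcon
  have hadj : ∀ z ∈ N, ∀ b ∈ B, z ≠ b → G.Adj z b := by
    intro z hz b hb hzb
    by_cases hzB : z ∈ B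
    · exact hB hzB hb hzb
    · exact hcon z hz hzB (by simp) (by simp [hb]) hzb
  refine hNclique fun x hx y hy hxy ↦ ?_
  by_cases hxB : x ∈ B
  · exact (hadj y hy x hxB hxy.symm).symm
  by_cases hyB : y ∈ B
  · exact hadj x hx y hyB hxy
  have hyBN : insert y B ⊆ N := insert_subset hy hBN
  have hclique : G.IsClique (insert v (insert y B) : Finset V) :=
    isClique_coe_insert (isClique_coe_insert hB (hadj y hy)) fun b hb _ ↦ hN b (hyBN hb)
  have hvB : v ∉ insert y B := fun h ↦ (hN v (hyBN h)).ne rfl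
  refine hG hclique ?_ (show B ⊆ _ by grind) (fun b hb ↦ hadj x hx b hb ?_) (by lia) y (by simp)
    hxy.symm
  · rw [card_insert_of_notMem hvB, card_insert_of_notMem hyB]
    lia
  · rintro rfl
    exact hxB hb

lemma CliqueAbsorbing.isClique_insert_of_erase_subset (hG : CliqueAbsorbing G k)
    (hN : ∀ u ∈ N, G.Adj v u) (hBN : B ⊆ N) (hB : G.IsClique B) (hcard : 2 * k + 1 ≤ #B)
    (hz : z ∈ N) (hzB : z ∉ B) (hC : G.IsClique C) (hzC : z ∈ C) {w : V} (hBC : B.erase w ⊆ C) :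
    G.IsClique (insert z B : Finset V) := by
  have hvB : v ∉ B := fun h ↦ (hN v (hBN h)).ne rfl
  have hclique : G.IsClique (insert v B : Finset V) :=
    isClique_coe_insert hB fun b hb _ ↦ hN b (hBN hb)
  refine isClique_coe_insert hB fun b hb hzb ↦
    hG hclique ?_ (insert_subset_insert v (erase_subset w B)) ?_ ?_ b (by simp [hb]) hzb.symm
  · rw [card_insert_of_notMem hvB]
    lia
  · intro a ha
    obtain rfl | ha := mem_insert.1 ha
    · exact (hN z hz).symm
    · exact hC hzC (hBC ha) (by grind)
  · have := pred_card_le_card_erase (s := B) (a := w)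
    rw [card_insert_of_notMem (by grind)]
    lia

/-- Replaces `y` by `z` in `B` if `y` is a member of `B`. -/
def exchange (y z : V) (B : Finset V) : Finset V := if y ∈ B then insert z (B.erase y) else B

lemma notMem_exchange {y : V} (hzB : z ∉ B) : y ∉ exchange y z B := by
  grind [exchange]

lemma card_exchange {y : V} (hzB : z ∉ B) : #(exchange y z B) = #B := by
  rw [exchange]
  split_ifs with hy
  · rw [card_insert_of_notMem (by grind), card_erase_add_one hy]
  · rfl

/-- `B ⊆ N` is a clique on at least `2 * k + 1` vertices. -/
def IsLargeClique (G : SimpleGraph V) (k : ℕ) (N B : Finset V) : Prop :=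
  B ⊆ N ∧ G.IsClique B ∧ 2 * k + 1 ≤ #B

lemma CliqueAbsorbing.exists_forall_not_isClique_insert (hG : CliqueAbsorbing G k)
    (hN : ∀ u ∈ N, G.Adj v u) (hNclique : ¬ G.IsClique N) :
    ∃ ζ : Finset V → V, ∀ B, IsLargeClique G k N B →
      ζ B ∈ N ∧ ζ B ∉ B ∧ ¬ G.IsClique (insert (ζ B) B : Finset V) := by
  have hexists (B : Finset V) : ∃ z, IsLargeClique G k N B →
      z ∈ N ∧ z ∉ B ∧ ¬ G.IsClique (insert z B : Finset V) := by
    by_cases hB : IsLargeClique G k N B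
    · obtain ⟨z, hz⟩ := hG.exists_not_isClique_insert hN hNclique hB.1 hB.2.1 hB.2.2
      exact ⟨z, fun _ ↦ hz⟩
    · exact ⟨v, fun h ↦ absurd h hB⟩
  exact ⟨fun B ↦ (hexists B).choose, fun B ↦ (hexists B).choose_spec⟩

lemma CliqueAbsorbing.exchange_injOn (hG : CliqueAbsorbing G k) (hN : ∀ u ∈ N, G.Adj v u)
    {ζ : Finset V → V} (hζ : ∀ B, IsLargeClique G k N B →
      ζ B ∈ N ∧ ζ B ∉ B ∧ ¬ G.IsClique (insert (ζ B) B : Finset V)) (y : V) :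
    Set.InjOn (fun B ↦ exchange y (ζ B) B) {B | IsLargeClique G k N B} := by
  have hout : ∀ B C, IsLargeClique G k N B → IsLargeClique G k N C → ζ B ∈ C →
      ∀ w, ¬ B.erase w ⊆ C := fun B C hB hC hzC w hBC ↦
    (hζ B hB).2.2 (hG.isClique_insert_of_erase_subset hN hB.1 hB.2.1 hB.2.2 (hζ B hB).1
      (hζ B hB).2.1 hC.2.1 hzC hBC)
  intro B hB C hC hBC
  have hzB := (hζ B hB).2.1
  have hzC := (hζ C hC).2.1
  simp only [exchange] at hBC
  split_ifs at hBC with hyB hyC hyC <;>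
    simp only [Finset.ext_iff, mem_insert, mem_erase] at hBC
  · by_cases hz : ζ B = ζ C
    · ext u
      grind
    · exact absurd (show B.erase (ζ C) ⊆ C by grind) (hout B C hB hC (by grind) _)
  · exact absurd (show B.erase y ⊆ C by grind) (hout B C hB hC (by grind) y)
  · exact absurd (show C.erase y ⊆ B by grind) (hout C B hC hB (by grind) y)
  · exact Finset.ext hBC

end CliqueExchange

section Counting

variable {V : Type*} [Fintype V] [DecidableEq V] {G : SimpleGraph V} [DecidableRel G.Adj] {k : ℕ}
  {N : Finset V} {v : V}

lemma CliqueAbsorbing.card_filter_isClique_below_le (hG : CliqueAbsorbing G k)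
    (hN : ∀ u ∈ N, G.Adj v u) (hNclique : ¬ G.IsClique N) (y : V) :
    #{p : VertexOrder V | 2 * k + 1 ≤ #(below p N v) ∧ G.IsClique (below p N v)} ≤
      #{p : VertexOrder V | 2 * k + 1 ≤ #(below p N v) ∧ y ∉ below p N v} := by
  have hv : v ∉ N := fun h ↦ (hN v h).ne rfl
  obtain ⟨ζ, hζ⟩ := hG.exists_forall_not_isClique_insert hN hNclique
  -- Swapping `y` out for a vertex that does not extend the clique can be undone: the exchanged set
  -- still determines the clique, as `k + 1` neighbours in it would force adjacency to all of it.
  let φ (p : VertexOrder V) : VertexOrder V :=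
    if y ∈ below p N v then (Equiv.swap y (ζ (below p N v))).trans p else p
  have hφ (p : VertexOrder V) (hp : IsLargeClique G k N (below p N v)) :
      below (φ p) N v = exchange y (ζ (below p N v)) (below p N v) := by
    simp only [φ, exchange]
    split_ifs with hy
    · exact below_swap_trans hv (hζ _ hp).1 (hζ _ hp).2.1 hy
    · rfl
  have hlarge {p : VertexOrder V} (hp : p ∈ ({p | 2 * k + 1 ≤ #(below p N v) ∧
      G.IsClique (below p N v)} : Finset (VertexOrder V))) : IsLargeClique G k N (below p N v) :=
    ⟨below_subset p N v, (mem_filter.1 hp).2.symm⟩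
  refine card_le_card_of_injOn φ (fun p hp ↦ ?_) fun p hp q hq hpq ↦ ?_
  · have hzB := (hζ _ (hlarge hp)).2.1
    rw [mem_coe, mem_filter, hφ p (hlarge hp), card_exchange hzB]
    exact ⟨mem_univ _, (hlarge hp).2.2, notMem_exchange hzB⟩
  · have hbelow : below p N v = below q N v :=
      hG.exchange_injOn hN hζ y (hlarge hp) (hlarge hq) <| by
        simp only [← hφ p (hlarge hp), ← hφ q (hlarge hq), hpq]
    simp only [φ, hbelow] at hpq
    split_ifs at hpq with hy
    · exact Equiv.ext fun u ↦ by
        simpa using congrArg (fun r : VertexOrder V ↦ r (Equiv.swap y (ζ (below q N v)) u)) hpq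
    · exact hpq

lemma CliqueAbsorbing.sum_card_below_le (hG : CliqueAbsorbing G k) (hN : ∀ u ∈ N, G.Adj v u)
    (hNclique : ¬ G.IsClique N) :
    ∑ p : VertexOrder V with 2 * k + 1 ≤ #(below p N v), #(below p N v) ≤
      #N * #{p : VertexOrder V | 2 * k + 1 ≤ #(below p N v) ∧ ¬ G.IsClique (below p N v)} := by
  set L : Finset (VertexOrder V) := {p | 2 * k + 1 ≤ #(below p N v)} with hL
  have hclique : #N * #{p ∈ L | G.IsClique (below p N v)} ≤ ∑ p ∈ L, #(N \ below p N v) := by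
    calc #N * #{p ∈ L | G.IsClique (below p N v)}
        = ∑ _y ∈ N, #{p ∈ L | G.IsClique (below p N v)} := by rw [sum_const, smul_eq_mul]
      _ ≤ ∑ y ∈ N, #{p ∈ L | y ∉ below p N v} := by
        simp only [hL, filter_filter]
        exact sum_le_sum fun y _ ↦ hG.card_filter_isClique_below_le hN hNclique y
      _ = ∑ p ∈ L, #(N \ below p N v) := by
        simp only [card_filter, ← filter_notMem_eq_sdiff]
        exact sum_comm
  have hsplit : ∑ p ∈ L, (#(N \ below p N v) + #(below p N v)) =
      #N * (#{p ∈ L | G.IsClique (below p N v)} + #{p ∈ L | ¬ G.IsClique (below p N v)}) := by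
    rw [card_filter_add_card_filter_not, mul_comm, ← smul_eq_mul, ← sum_const]
    exact sum_congr rfl fun p _ ↦ card_sdiff_add_card_eq_card (below_subset p N v)
  rw [sum_add_distrib, mul_add] at hsplit
  rw [← filter_filter]
  lia

lemma two_mul_sum_range_min {d D : ℕ} (h : d ≤ D) :
    2 * ∑ j ∈ range (D + 1), min d j + d * (d + 1) = 2 * d * (D + 1) := by
  induction D, h using Nat.le_induction with
  | base =>
    have hmin : ∑ j ∈ range (d + 1), min d j = ∑ j ∈ range (d + 1), j :=
      sum_congr rfl fun j hj ↦ min_eq_right (mem_range_succ_iff.1 hj)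
    have hgauss := sum_range_id_mul_two (d + 1)
    rw [Nat.add_sub_cancel] at hgauss
    rw [hmin]
    nlinarith
  | succ D h ih =>
    rw [sum_range_succ, min_eq_left (by lia)]
    nlinarith

lemma two_mul_sum_range_ite {m D : ℕ} (h : m ≤ D) :
    2 * ∑ j ∈ range (D + 1), (if m + 1 ≤ j then j else 0) + m * (m + 1) = D * (D + 1) := by
  induction D, h using Nat.le_induction with
  | base =>
    rw [sum_eq_zero fun j hj ↦ if_neg (by have := mem_range.1 hj; lia)]
    lia
  | succ D h ih =>
    rw [sum_range_succ, if_pos (by lia)]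
    nlinarith

lemma mul_lt_sum_range_min_add {D : ℕ} (hD : k ^ 2 + 3 * k + 5 ≤ D) :
    D * (D + 1) * (k + 1) <
      ∑ j ∈ range (D + 1), (D * min (k + 1) j + if 2 * k + 1 ≤ j then j else 0) := by
  have hmin := two_mul_sum_range_min (show k + 1 ≤ D by nlinarith)
  have hite := two_mul_sum_range_ite (show 2 * k ≤ D by nlinarith)
  rw [sum_add_distrib, ← mul_sum]
  have hlarge : D * (k ^ 2 + 3 * k + 6) ≤ D * (D + 1) := Nat.mul_le_mul_left D (by lia)
  have hsmall : 2 * k * (2 * k + 1) < 4 * D := by nlinarith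
  have hmin' := congrArg (D * ·) hmin
  linarith [hmin', hite, hlarge, hsmall]

/-- The number by which the rank of the edges of a closed graph is guaranteed to grow when a new
vertex is attached to the set `B` of its neighbours. -/
def rankGain (G : SimpleGraph V) [DecidableRel G.Adj] (k : ℕ) (B : Finset V) : ℕ :=
  min (k + 1) #B + if 2 * k + 1 ≤ #B ∧ ¬ G.IsClique B then 1 else 0

lemma CliqueAbsorbing.mul_card_lt_sum_rankGain (hG : CliqueAbsorbing G k)
    (hN : ∀ u ∈ N, G.Adj v u) (hNclique : ¬ G.IsClique N) (hcard : k ^ 2 + 3 * k + 5 ≤ #N) :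
    (k + 1) * Fintype.card (VertexOrder V) <
      ∑ p : VertexOrder V, rankGain G k (below p N v) := by
  let f (j : ℕ) : ℕ := #N * min (k + 1) j + if 2 * k + 1 ≤ j then j else 0
  have hpos : 0 < Fintype.card (VertexOrder V) := Fintype.card_pos_iff.2 ⟨Fintype.equivFin V⟩
  have hgain : ∑ p : VertexOrder V, f #(below p N v) ≤
      #N * ∑ p : VertexOrder V, rankGain G k (below p N v) := by
    simp only [f, rankGain, sum_add_distrib, mul_add, ← mul_sum, ← sum_filter,
      ← card_eq_sum_ones]
    exact Nat.add_le_add_left (hG.sum_card_below_le hN hNclique) _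
  refine lt_of_mul_lt_mul_left' (a := (#N + 1) * #N) ?_
  calc (#N + 1) * #N * ((k + 1) * Fintype.card (VertexOrder V))
      = Fintype.card (VertexOrder V) * (#N * (#N + 1) * (k + 1)) := by ring
    _ < Fintype.card (VertexOrder V) * ∑ j ∈ range (#N + 1), f j :=
        Nat.mul_lt_mul_of_pos_left (mul_lt_sum_range_min_add hcard) hpos
    _ = (#N + 1) * ∑ p : VertexOrder V, f #(below p N v) :=
        (card_add_one_mul_sum_comp_card_below f fun h ↦ (hN v h).ne rfl).symm
    _ ≤ (#N + 1) * #N * ∑ p : VertexOrder V, rankGain G k (below p N v) := by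
        rw [mul_assoc]
        exact Nat.mul_le_mul_left _ hgain

end Counting

lemma CliqueAbsorbing.exists_isClique_filter_adj {V : Type*} [Finite V] [DecidableEq V]
    {G : SimpleGraph V} [DecidableRel G.Adj] {k : ℕ} (hG : CliqueAbsorbing G k) {r : Finset V → ℕ}
    (hr : ∀ X, r X ≤ (k + 1) * #X)
    (hgain : ∀ ⦃v Y B⦄, v ∉ Y → B ⊆ Y → (∀ z ∈ B, G.Adj v z) →
      r Y + rankGain G k B ≤ r (insert v Y))
    {X : Finset V} (hX : X.Nonempty) (hdeg : ∀ v ∈ X, k ^ 2 + 3 * k + 5 ≤ #{u ∈ X | G.Adj v u}) :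
    ∃ v ∈ X, G.IsClique {u ∈ X | G.Adj v u} := by
  have := Fintype.ofFinite V
  by_contra! hcon
  have hle (p : VertexOrder V) :
      ∑ v ∈ X, rankGain G k (below p {u ∈ X | G.Adj v u} v) ≤ (k + 1) * #X := by
    refine (sum_le_of_forall_below p r _ fun v _ ↦ ?_).trans (hr X)
    exact hgain (notMem_below_self p X v) (filter_subset_filter _ (filter_subset _ X))
      fun z hz ↦ (mem_filter.1 (below_subset _ _ _ hz)).2
  have hlt : ∀ v ∈ X, (k + 1) * Fintype.card (VertexOrder V) <
      ∑ p : VertexOrder V, rankGain G k (below p {u ∈ X | G.Adj v u} v) := fun v hv ↦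
    hG.mul_card_lt_sum_rankGain (fun u hu ↦ (mem_filter.1 hu).2) (by simpa using hcon v hv)
      (hdeg v hv)
  have hsum := calc
    #X * ((k + 1) * Fintype.card (VertexOrder V))
      < ∑ v ∈ X, ∑ p : VertexOrder V, rankGain G k (below p {u ∈ X | G.Adj v u} v) := by
        rw [← smul_eq_mul, ← sum_const]
        exact sum_lt_sum_of_nonempty hX hlt
    _ ≤ ∑ _p : VertexOrder V, (k + 1) * #X := by
        rw [sum_comm]
        exact sum_le_sum fun p _ ↦ hle p
    _ = #X * ((k + 1) * Fintype.card (VertexOrder V)) := by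
        rw [sum_const, card_univ, smul_eq_mul]
        ring
  exact hsum.false

section SimplicialElimination

variable {V : Type*} {G : SimpleGraph V} {c k : ℕ} {X : Finset V}

/-- The subgraph of `G` induced on `X` is `c`-connected, expressed by separations: at least `c`
vertices of `X` lie outside any two nonempty disjoint subsets of `X` with no edge between them. -/
def KConnectedOn (G : SimpleGraph V) (c : ℕ) (X : Finset V) : Prop :=
  c + 1 ≤ #X ∧ ∀ ⦃A B : Finset V⦄, A ⊆ X → B ⊆ X → A.Nonempty → B.Nonempty → Disjoint A B →
    (∀ a ∈ A, ∀ b ∈ B, ¬ G.Adj a b) → #A + #B + c ≤ #X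

lemma KConnectedOn.mono {H : SimpleGraph V} (hX : KConnectedOn G c X) (hGH : G ≤ H) :
    KConnectedOn H c X :=
  ⟨hX.1, fun _ _ hAX hBX hA hB hdisj hnadj ↦
    hX.2 hAX hBX hA hB hdisj fun a ha b hb hab ↦ hnadj a ha b hb (hGH hab)⟩

lemma KConnectedOn.add_two_le_card (hX : KConnectedOn G c X) (hclique : ¬ G.IsClique X) :
    c + 2 ≤ #X := by
  obtain ⟨a, ha, b, hb, hab, hadj⟩ : ∃ a ∈ X, ∃ b ∈ X, a ≠ b ∧ ¬ G.Adj a b := by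
    simpa [SimpleGraph.IsClique, Set.Pairwise] using hclique
  have := hX.2 (A := {a}) (B := {b}) (by simpa) (by simpa) (by simp) (by simp) (by simpa)
    (by simpa)
  simp only [card_singleton] at this
  lia

lemma KConnectedOn.le_card_filter_adj [DecidableRel G.Adj] (hX : KConnectedOn G c X) {v : V}
    (hv : v ∈ X) : c ≤ #{u ∈ X | G.Adj v u} := by
  classical
  set N : Finset V := {u ∈ X | G.Adj v u} with hN
  have hcard := card_sdiff_add_card_eq_card (insert_subset hv (filter_subset (G.Adj v) X))
  rw [← hN, card_insert_of_notMem (by simp [hN])] at hcard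
  obtain hempty | hne := (X \ insert v N).eq_empty_or_nonempty
  · have := hX.1
    rw [hempty, card_empty] at hcard
    lia
  · have := hX.2 (A := {v}) (by simpa) sdiff_subset (by simp) hne (by simp) (by grind)
    rw [card_singleton] at this
    lia

lemma KConnectedOn.erase [DecidableEq V] (hX : KConnectedOn G c X) (hcard : c + 2 ≤ #X) {x : V}
    (hx : x ∈ X) (hclique : G.IsClique {u ∈ X | G.Adj x u}) :
    KConnectedOn G c (X.erase x) := by
  have hxcard := card_erase_add_one hx
  refine ⟨by lia, fun A B hA hB hAne hBne hdisj hnadj ↦ ?_⟩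
  have hAX : A ⊆ X := hA.trans (erase_subset x X)
  have hBX : B ⊆ X := hB.trans (erase_subset x X)
  have hxA : x ∉ A := fun h ↦ notMem_erase x X (hA h)
  have hxB : x ∉ B := fun h ↦ notMem_erase x X (hB h)
  by_cases hxadj : ∃ y ∈ B, G.Adj x y
  · obtain ⟨y, hy, hxy⟩ := hxadj
    have hnadjx : ∀ a ∈ A, ¬ G.Adj a x := fun a ha hax ↦ hnadj a ha y hy <|
      hclique ⟨hAX ha, hax.symm⟩ ⟨hBX hy, hxy⟩ (disjoint_iff_ne.1 hdisj a ha y hy)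
    have := hX.2 hAX (insert_subset hx hBX) hAne (insert_nonempty x B)
      (disjoint_insert_right.2 ⟨hxA, hdisj⟩) (by grind)
    rw [card_insert_of_notMem hxB] at this
    lia
  · have := hX.2 (insert_subset hx hAX) hBX (insert_nonempty x A) hBne
      (disjoint_insert_left.2 ⟨hxB, hdisj⟩) (by grind)
    rw [card_insert_of_notMem hxA] at this
    lia

lemma CliqueAbsorbing.isClique_of_kConnectedOn (hG : CliqueAbsorbing G k) (hc : 2 * k + 2 ≤ c)
    (hsimplicial : ∀ Y : Finset V, KConnectedOn G c Y → ∃ x ∈ Y, G.IsClique {u ∈ Y | G.Adj x u})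
    (hX : KConnectedOn G c X) : G.IsClique X := by
  classical
  induction X using Finset.strongInduction with
  | H X ih =>
    by_contra hclique
    have hcard := hX.add_two_le_card hclique
    obtain ⟨x, hx, hxclique⟩ := hsimplicial X hX
    have herase : G.IsClique (X.erase x : Finset V) :=
      ih _ (erase_ssubset hx) (hX.erase hcard hx hxclique)
    have hxcard := card_erase_add_one hx
    have hdeg := hX.le_card_filter_adj hx
    refine hclique ?_
    rw [← insert_erase hx]
    exact isClique_coe_insert herase fun b hb hxb ↦ hG herase (by lia)
      (show {u ∈ X | G.Adj x u} ⊆ X.erase x by grind [SimpleGraph.Adj.ne])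
      (fun w hw ↦ (mem_filter.1 hw).2) (by lia) b hb hxb.symm

end SimplicialElimination

section DisjointSpanning

variable {V : Type*} [Finite V] {M N : Matroid (Sym2 V)} {G : SimpleGraph V} {k : ℕ}

lemma IsClosedGraph.eRk_edgesOn_add_rankGain_le [DecidableEq V] [DecidableRel G.Adj]
    (hM : IsRigidityMatroid M k) (hN : IsRigidityMatroid N 1) (hk : 0 < k)
    (hG : IsClosedGraph (matroidUnion M N) G) {v : V} {Y B : Finset V} (hv : v ∉ Y) (hBY : B ⊆ Y)
    (hvB : ∀ z ∈ B, G.Adj v z) :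
    (matroidUnion M N).eRk (edgesOn G Y) + rankGain G k B ≤
      (matroidUnion M N).eRk (edgesOn G (insert v Y)) := by
  rw [rankGain]
  split_ifs with hB
  · rw [min_eq_left (by lia)]
    exact hG.eRk_edgesOn_add_le hM hN hk one_pos hv hBY hvB (by lia) hB.2
  · exact eRk_edgesOn_add_min_le hM hN hv hBY hvB

lemma IsClosedGraph.exists_isClique_filter_adj (hM : IsRigidityMatroid M k)
    (hN : IsRigidityMatroid N 1) (hk : 0 < k)
    (hG : IsClosedGraph (matroidUnion M N) G) {X : Finset V}
    (hX : KConnectedOn G (k ^ 2 + 3 * k + 5) X) : ∃ x ∈ X, G.IsClique {u ∈ X | G.Adj x u} := by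
  classical
  have hle (Y : Finset V) := eRk_edgesOn_le (G := G) hM hN Y
  have hcast (Y : Finset V) : (((matroidUnion M N).eRk (edgesOn G Y)).toNat : ℕ∞) =
      (matroidUnion M N).eRk (edgesOn G Y) :=
    ENat.natCast_toNat (ne_top_of_le_ne_top (ENat.natCast_ne_top _) (hle Y))
  refine (hG.cliqueAbsorbing hM hN).exists_isClique_filter_adj
    (r := fun Y ↦ ((matroidUnion M N).eRk (edgesOn G Y)).toNat) (fun Y ↦ ?_)
    (fun v Y B hv hBY hvB ↦ ?_) (card_pos.1 (by have := hX.1; lia))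
    fun v hv ↦ hX.le_card_filter_adj hv
  · exact ENat.toNat_le_of_le_natCast (hle Y)
  · rw [← Nat.cast_le (α := ℕ∞), Nat.cast_add, hcast, hcast]
    exact hG.eRk_edgesOn_add_rankGain_le hM hN hk hv hBY hvB

lemma IsClosedGraph.isClique_of_kConnectedOn (hM : IsRigidityMatroid M k)
    (hN : IsRigidityMatroid N 1) (hk : 0 < k) (hG : IsClosedGraph (matroidUnion M N) G)
    {X : Finset V} (hX : KConnectedOn G (k ^ 2 + 3 * k + 5) X) : G.IsClique X := by
  classical
  exact (hG.cliqueAbsorbing hM hN).isClique_of_kConnectedOn (by nlinarith)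
    (fun _ ↦ hG.exists_isClique_filter_adj hM hN hk) hX

end DisjointSpanning

lemma spansDisjointly_edgeSet_univ {V : Type*} [Fintype V] {M N : Matroid (Sym2 V)}
    {G : SimpleGraph V} {k : ℕ} (hM : IsRigidityMatroid M k) (hN : IsRigidityMatroid N 1)
    (hk : 0 < k) (hG : KConnectedOn G (k ^ 2 + 3 * k + 5) univ) :
    SpansDisjointly M N G.edgeSet Set.univ := by
  have hground : (matroidUnion M N).E = Set.univ := by
    simp [matroidUnion_ground, hM.ground_eq]
  obtain ⟨H, hGH, hH, hrank⟩ := exists_isClosedGraph hground G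
  have hclique : H.IsClique (univ : Finset V) :=
    hH.isClique_of_kConnectedOn hM hN hk (hG.mono hGH)
  have hspan := spansDisjointly_of_isClique hM hN hclique (by nlinarith [hG.1])
  have huniv : ((univ : Finset V).sym2 : Set (Sym2 V)) = Set.univ := by simp
  rw [edgesOn, huniv, Set.inter_univ] at hspan
  exact spansDisjointly_of_eRk_add_eRk_le (Set.subset_univ _) hM.ground_eq.ge hN.ground_eq.ge
    (hspan.eRk_add_eRk_le.trans hrank.le)

section Connectivity

variable {V : Type*} {G : SimpleGraph V} {k : ℕ}

lemma KConnected.kConnectedOn_univ [Fintype V] (hG : KConnected G k) :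
    KConnectedOn G k univ := by
  classical
  refine ⟨by simpa using hG.1, fun A B _ _ ⟨a, ha⟩ ⟨b, hb⟩ hdisj hnadj ↦ ?_⟩
  by_contra! hlt
  have hcard := card_compl_add_card (A ∪ B)
  rw [card_union_of_disjoint hdisj, ← card_univ] at hcard
  have hconn := hG.2 ↑(A ∪ B)ᶜ (finite_toSet _) (by rw [Set.ncard_coe_finset]; lia)
  have hmem (w : V) : w ∈ ((↑(A ∪ B)ᶜ)ᶜ : Set V) ↔ w ∈ A ∨ w ∈ B := by
    simp [or_iff_not_imp_left]
  obtain ⟨p⟩ := hconn.preconnected ⟨a, (hmem a).2 (.inl ha)⟩ ⟨b, (hmem b).2 (.inr hb)⟩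
  obtain ⟨d, -, hdA, hdA'⟩ := p.exists_boundary_dart {w | w.1 ∈ A} ha (disjoint_right.1 hdisj hb)
  exact hnadj _ hdA _ (((hmem _).1 d.snd.2).resolve_left hdA') d.adj

lemma KConnected.connected (hG : KConnected G k) (hk : 0 < k) : G.Connected := by
  have hconn := hG.2 ∅ Set.finite_empty (by simpa)
  rw [Set.compl_empty] at hconn
  exact (SimpleGraph.induceUnivIso G).connected_iff.1 hconn

lemma IsRigidityMatroid.kConnected [Finite V] {M : Matroid (Sym2 V)} (hM : IsRigidityMatroid M k)
    (hcard : k + 1 ≤ Nat.card V) (hspan : M.closure G.edgeSet = Set.univ) : KConnected G k := by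
  classical
  have := Fintype.ofFinite V
  refine ⟨hcard, fun S hS hSk ↦ ?_⟩
  rw [SimpleGraph.connected_iff]
  constructor
  · rintro ⟨x, hx⟩ ⟨y, hy⟩
    by_contra hxy
    let A : Finset V := {w | ∃ h : w ∈ Sᶜ, (G.induce Sᶜ).Reachable ⟨x, hx⟩ ⟨w, h⟩}
    have hA {w : V} : w ∈ A ↔ ∃ h : w ∈ Sᶜ, (G.induce Sᶜ).Reachable ⟨x, hx⟩ ⟨w, h⟩ := by simp [A]
    obtain ⟨a, ha, b, hb, hbS, hab⟩ := hM.exists_adj_of_mem_closure (A := A) (S := hS.toFinset)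
      (hspan.ge (Set.mem_univ s(x, y))) (hA.2 ⟨hx, .rfl⟩) (by simpa using hx)
      (fun h ↦ hxy (hA.1 h).2) (by simpa using hy) (by rwa [← Set.ncard_eq_toFinset_card S hS])
    obtain ⟨haS, hreach⟩ := hA.1 ha
    have hbS' : b ∈ Sᶜ := fun h ↦ hbS (hS.mem_toFinset.2 h)
    have hadj : (G.induce Sᶜ).Adj ⟨a, haS⟩ ⟨b, hbS'⟩ := hab
    exact hb (hA.2 ⟨hbS', hreach.trans hadj.reachable⟩)
  · rw [Set.nonempty_coe_sort, Set.nonempty_compl]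
    rintro rfl
    rw [Set.ncard_univ] at hSk
    lia

end Connectivity

end RemovablePath

open RemovablePath

/-- If `G` is a `(k²+3k+5)`-connected finite simple graph, then for every pair of vertices
`s`, `t` there is a path `P` from `s` to `t` in `G` such that `G − E(P)` is `k`-connected. -/
theorem removable_path {V : Type*} [Fintype V] (k : ℕ) (hk : 0 < k)
    (G : SimpleGraph V) (hG : KConnected G (k ^ 2 + 3 * k + 5)) (s t : V) :
    ∃ p : G.Walk s t, p.IsPath ∧
      KConnected (G.deleteEdges {e | e ∈ p.edges}) k := by
  have hcard : k + 2 ≤ Nat.card V := by nlinarith [hG.1]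
  obtain ⟨M, hM⟩ := exists_isRigidityMatroid V k
  obtain ⟨N, hN⟩ := exists_isRigidityMatroid V 1
  obtain ⟨F₁, F₂, hF₁, hF₂, hdisj, hspan₁, hspan₂⟩ :=
    spansDisjointly_edgeSet_univ hM hN hk hG.kConnectedOn_univ
  have hF₂' : F₂ ⊆ (G.deleteEdges F₁).edgeSet := by
    rw [SimpleGraph.edgeSet_deleteEdges]
    exact Set.subset_sdiff.2 ⟨hF₂, hdisj.symm⟩
  have hconn : (G.deleteEdges F₁).Connected := (hN.kConnected (by lia) <|
    Set.univ_subset_iff.1 (hspan₂.trans (N.closure_subset_closure hF₂'))).connected one_pos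
  obtain ⟨p, hp⟩ := (hconn.preconnected s t).exists_isPath
  refine ⟨p.mapLe (G.deleteEdges_le F₁), hp.mapLe _, hM.kConnected (by lia) <|
    Set.univ_subset_iff.1 (hspan₁.trans (M.closure_subset_closure ?_))⟩
  rw [SimpleGraph.edgeSet_deleteEdges]
  refine Set.subset_sdiff.2 ⟨hF₁, Set.disjoint_right.2 fun e he ↦ ?_⟩
  have hep : e ∈ p.edges := by simpa using he
  have := p.edges_subset_edgeSet hep
  rw [SimpleGraph.edgeSet_deleteEdges] at this
  exact this.2
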